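/- There exist δ₀ > 0 and c > 0 depending only on n ≥ 2 such that the following holds: if δ ∈ (0, δ₀], and K ⊂ ℝⁿ is an origin-symmetric convex body with K ⊆ B∞ⁿ, ±e_j ∈ ∂K for all j = 1,…,n, (1−δ)B∞ⁿ ⊆ K, and δ is minimal with this property (i.e., (1−δ′)B∞ⁿ ⊄ K for every 0 ≤ δ′ < δ), then volₙ(K)·volₙ(K*) ≥ 4ⁿ/n! + cδ. -/

import Mathlib

open MeasureTheory RealInnerProductSpace ENNReal Pointwise

noncomputable section

/-- The unit cube `B∞ⁿ = {x : |xᵢ| ≤ 1 ∀ i}`. -/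
def cube (n : ℕ) : Set (EuclideanSpace ℝ (Fin n)) := {x | ∀ i, |x i| ≤ 1}

/-- The polar body `K* = {ξ : ⟨x, ξ⟩ ≤ 1 ∀ x ∈ K}`. -/
def polarBody {n : ℕ} (K : Set (EuclideanSpace ℝ (Fin n))) :
    Set (EuclideanSpace ℝ (Fin n)) :=
  {ξ | ∀ x ∈ K, ⟪x, ξ⟫ ≤ 1}

/-- The standard basis vector `e_j` of `ℝⁿ`. -/
def stdVec (n : ℕ) (j : Fin n) : EuclideanSpace ℝ (Fin n) :=
  EuclideanSpace.single j (1 : ℝ)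

/-!
The barycentric triangulation of the cube has one simplex with apex `0` for every flag of faces, and
its other vertices are the centers `t` of the faces of the flag. Replacing `t` by the point `x` of
`K` on the coordinate subspace of `t` that maximizes `∏ |xᵢ|`, and replacing `t / |t|₁`, a vertex of
the corresponding triangulation of the cross-polytope, by `y / |t|₁`, gives simplices inside `K` and
inside the polar. Here `y / |t|₁` is a functional that is at most `1` on `K` and satisfies
`yᵢ = 1 / xᵢ` on the support of `t`; it exists by maximality of `x` and Hahn–Banach. All points move
by `O(δ)`, so the volumes change by the traces of the displacements up to `O(δ²)`, and
`s + 1 / s ≥ 2` makes the two first-order terms sum to something nonnegative.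

A gain of order `δ` comes from a vertex `v` of the cube with `(1 - δ / 2) v ∉ K`. A point slightly
inside `v`, pulled towards a facet center, either belongs to `K` and lies beyond one of the
simplices in `K`, or is separated from `K` by a functional that lies beyond one of the simplices in
the polar. Either way a simplex can be enlarged by a fraction of order `δ`.
-/

open scoped Matrix Topology

/-! ### Signs and the corner simplex -/

/-- The sign `±1 : ℤˣ` as a real number. -/
def sgn (u : ℤˣ) : ℝ := ((u : ℤ) : ℝ)

lemma sgn_eq_one_or (u : ℤˣ) : sgn u = 1 ∨ sgn u = -1 := by
  rcases Int.units_eq_one_or u with rfl | rfl <;> simp [sgn]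

lemma sgn_mul_self (u : ℤˣ) : sgn u * sgn u = 1 := by
  rcases sgn_eq_one_or u with h | h <;> simp [h]

lemma sgn_mul_sgn_mul (u : ℤˣ) (x : ℝ) : sgn u * (sgn u * x) = x := by
  rw [← mul_assoc, sgn_mul_self, one_mul]

lemma abs_sgn (u : ℤˣ) : |sgn u| = 1 := by
  rcases sgn_eq_one_or u with h | h <;> simp [h]

lemma sgn_ne_zero (u : ℤˣ) : sgn u ≠ 0 := fun h => by simpa [h] using abs_sgn u

lemma abs_sgn_mul (u : ℤˣ) (x : ℝ) : |sgn u * x| = |x| := by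
  rw [abs_mul, abs_sgn, one_mul]

lemma exists_sgn_mul_eq_abs (x : ℝ) : ∃ u : ℤˣ, sgn u * x = |x| := by
  rcases le_total 0 x with h | h
  · exact ⟨1, by simp [sgn, abs_of_nonneg h]⟩
  · exact ⟨-1, by simp [sgn, abs_of_nonpos h]⟩

lemma eq_of_sgn_mul_pos {u v : ℤˣ} {x : ℝ} (hu : 0 < sgn u * x) (hv : 0 < sgn v * x) : u = v := by
  rcases Int.units_eq_one_or u with rfl | rfl <;> rcases Int.units_eq_one_or v with rfl | rfl <;>
    simp only [sgn, Units.val_one, Units.val_neg, Int.cast_one, Int.cast_neg] at hu hv ⊢ <;>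
    linarith

section CornerSimplex

variable {ι : Type*} [Fintype ι]

variable (ι) in
/-- The open simplex spanned by the origin and the standard basis vectors. -/
def cornerSimplex : Set (ι → ℝ) := {t | (∀ i, 0 < t i) ∧ ∑ i, t i < 1}

lemma isOpen_cornerSimplex : IsOpen (cornerSimplex ι) := by
  have h : cornerSimplex ι = (⋂ i, {t : ι → ℝ | 0 < t i}) ∩ {t | ∑ i, t i < 1} := by
    ext t; simp [cornerSimplex]
  rw [h]
  exact (isOpen_iInter_of_finite fun i => isOpen_lt continuous_const (continuous_apply i)).inter
    (isOpen_lt (by fun_prop) continuous_const)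

lemma volume_preimage_sgn_mul (ε : ι → ℤˣ) (s : Set (ι → ℝ)) :
    volume {x : ι → ℝ | (fun i => sgn (ε i) * x i) ∈ s} = volume s := by
  classical
  have hset : {x : ι → ℝ | (fun i => sgn (ε i) * x i) ∈ s} =
      Matrix.toLin' (Matrix.diagonal fun i => sgn (ε i)) ⁻¹' s := by
    ext x; simp only [Set.mem_preimage, Matrix.toLin'_apply, Set.mem_ofPred_eq]
    congr! 1; ext i; simp [Matrix.mulVec_diagonal]
  have hdet : |LinearMap.det (Matrix.toLin' (Matrix.diagonal fun i => sgn (ε i)))| = 1 := by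
    simp [LinearMap.det_toLin', Matrix.det_diagonal, Finset.abs_prod, abs_sgn]
  rw [hset, Measure.addHaar_preimage_linearMap _ (abs_pos.1 (by rw [hdet]; exact one_pos)),
    abs_inv, hdet]
  simp

lemma ae_eq_iUnion_sgn_mul_mem_cornerSimplex :
    {x : ι → ℝ | ∑ i, |x i| < 1} =ᵐ[volume]
      ⋃ ε : ι → ℤˣ, {x : ι → ℝ | (fun i => sgn (ε i) * x i) ∈ cornerSimplex ι} := by
  have hnull : ∀ᵐ x : ι → ℝ, ∀ i, x i ≠ 0 := by
    rw [eventually_countable_forall]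
    exact fun i => compl_mem_ae_iff.2 (Measure.pi_hyperplane _ i 0)
  filter_upwards [hnull] with x hx
  refine propext ⟨fun hsum : ∑ i, |x i| < 1 => ?_, fun hmem => ?_⟩
  · choose ε hε using fun i => exists_sgn_mul_eq_abs (x i)
    refine Set.mem_iUnion.2 ⟨ε, fun i => ?_, ?_⟩
    · simpa only [hε, abs_pos] using hx i
    · simpa only [hε] using hsum
  · obtain ⟨ε, hpos, hsum⟩ := Set.mem_iUnion.1 hmem
    change ∑ i, |x i| < 1
    convert hsum using 2 with i
    rw [← abs_sgn_mul (ε i), abs_of_pos (hpos i)]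

lemma pairwise_disjoint_sgn_mul_mem_cornerSimplex :
    Pairwise (Function.onFun Disjoint fun ε : ι → ℤˣ =>
      {x : ι → ℝ | (fun i => sgn (ε i) * x i) ∈ cornerSimplex ι}) := fun _ _ hne =>
  Set.disjoint_left.2 fun _ h h' => hne (funext fun i => eq_of_sgn_mul_pos (h.1 i) (h'.1 i))

lemma volume_sum_abs_lt_one :
    volume {x : ι → ℝ | ∑ i, |x i| < 1} =
      2 ^ Fintype.card ι * ((Fintype.card ι).factorial : ℝ≥0∞)⁻¹ := by
  have h := volume_sum_rpow_lt_one ι (p := 1) le_rfl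
  simp only [Real.rpow_one, div_one] at h
  rw [h, Real.Gamma_nat_eq_factorial, one_add_one_eq_two, Real.Gamma_two, mul_one,
    div_eq_mul_inv, ENNReal.ofReal_mul (by positivity), ENNReal.ofReal_pow (by norm_num),
    ENNReal.ofReal_inv_of_pos (by positivity)]
  simp

lemma volume_cornerSimplex :
    volume (cornerSimplex ι) = ((Fintype.card ι).factorial : ℝ≥0∞)⁻¹ := by
  classical
  have hmeas (ε : ι → ℤˣ) :
      MeasurableSet {x : ι → ℝ | (fun i => sgn (ε i) * x i) ∈ cornerSimplex ι} :=
    isOpen_cornerSimplex.measurableSet.preimage (by fun_prop)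
  have h := volume_sum_abs_lt_one (ι := ι)
  rw [measure_congr ae_eq_iUnion_sgn_mul_mem_cornerSimplex,
    measure_iUnion pairwise_disjoint_sgn_mul_mem_cornerSimplex hmeas] at h
  simp only [volume_preimage_sgn_mul, tsum_fintype, Finset.sum_const, Finset.card_univ,
    Fintype.card_pi, Fintype.card_units_int, Finset.prod_const, nsmul_eq_mul, Nat.cast_pow,
    Nat.cast_ofNat] at h
  exact (ENNReal.mul_right_inj (by simp) (by simp)).1 h

end CornerSimplex

/-! ### Determinants near the identity -/

lemma abs_prod_one_add_sub_one_sub_sum_le {ι : Type*} (s : Finset ι) {x : ι → ℝ} {e : ℝ}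
    (he : e ≤ 1) (hx : ∀ i ∈ s, |x i| ≤ e) :
    |∏ i ∈ s, (1 + x i) - 1 - ∑ i ∈ s, x i| ≤ 4 ^ s.card * e ^ 2 := by
  classical
  induction s using Finset.induction_on with
  | empty => simpa using sq_nonneg e
  | insert a s ha ih =>
    rw [Finset.prod_insert ha, Finset.sum_insert ha, Finset.card_insert_of_notMem ha]
    have hxs : ∀ i ∈ s, |x i| ≤ e := fun i hi => hx i (Finset.mem_insert_of_mem hi)
    have hxa : |x a| ≤ e := hx a (Finset.mem_insert_self _ _)
    have he0 : 0 ≤ e := (abs_nonneg _).trans hxa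
    set P := ∏ i ∈ s, (1 + x i)
    set S := ∑ i ∈ s, x i
    have hS : |S| ≤ 2 * 4 ^ s.card * e := by
      calc |S| ≤ ∑ i ∈ s, |x i| := Finset.abs_sum_le_sum_abs _ _
        _ ≤ s.card * e := by simpa using Finset.sum_le_card_nsmul s _ e hxs
        _ ≤ 2 * 4 ^ s.card * e := by
          have hcard : (s.card : ℝ) ≤ 4 ^ s.card := by
            exact_mod_cast (Nat.lt_pow_self (by norm_num)).le
          gcongr
          linarith [pow_pos (show (0 : ℝ) < 4 by norm_num) s.card]
    calc |(1 + x a) * P - 1 - (x a + S)|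
        = |(1 + x a) * (P - 1 - S) + x a * S| := by ring_nf
      _ ≤ |1 + x a| * |P - 1 - S| + |x a| * |S| := by
          rw [← abs_mul, ← abs_mul]; exact abs_add_le _ _
      _ ≤ 2 * (4 ^ s.card * e ^ 2) + e * (2 * 4 ^ s.card * e) := by
          gcongr
          · rw [abs_le] at hxa ⊢; constructor <;> linarith
          · exact ih hxs
      _ = 4 ^ (s.card + 1) * e ^ 2 := by ring

section Determinant

variable {ι : Type*} [Fintype ι] [DecidableEq ι] {A : Matrix ι ι ℝ} {e : ℝ}

lemma abs_prod_perm_one_add_le (he : e ≤ 1) (hA : ∀ i j, |A i j| ≤ e)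
    {σ : Equiv.Perm ι} (hσ : σ ≠ 1) :
    |∏ i, (1 + A) (σ i) i| ≤ 2 ^ Fintype.card ι * e ^ 2 := by
  obtain ⟨i, hi⟩ : ∃ i, σ i ≠ i := by
    by_contra! h; exact hσ (Equiv.ext h)
  have he0 : 0 ≤ e := (abs_nonneg _).trans (hA i i)
  have hoff {i j : ι} (hij : i ≠ j) : |(1 + A) i j| ≤ e := by
    simpa [Matrix.add_apply, Matrix.one_apply_ne hij] using hA i j
  have hentry (i j : ι) : |(1 + A) i j| ≤ 2 := by
    have hone : |(1 : Matrix ι ι ℝ) i j| ≤ 1 := by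
      rw [Matrix.one_apply]; split_ifs <;> simp
    exact (abs_add_le _ _).trans (by linarith [hA i j])
  have hrest : ∏ x ∈ (Finset.univ.erase i).erase (σ i), |(1 + A) (σ x) x| ≤ 2 ^ Fintype.card ι := by
    calc _ ≤ (2 : ℝ) ^ ((Finset.univ.erase i).erase (σ i)).card :=
          (Finset.prod_le_prod (fun _ _ => abs_nonneg _) fun _ _ => hentry _ _).trans_eq (by simp)
      _ ≤ 2 ^ Fintype.card ι := pow_le_pow_right₀ (by norm_num) (Finset.card_le_univ _)
  rw [Finset.abs_prod, ← Finset.mul_prod_erase _ _ (Finset.mem_univ i),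
    ← Finset.mul_prod_erase _ _ (Finset.mem_erase.2 ⟨hi, Finset.mem_univ (σ i)⟩)]
  calc _ ≤ e * (e * 2 ^ Fintype.card ι) := by
        gcongr
        · exact hoff hi
        · exact hoff fun h => hi (σ.injective h)
    _ = 2 ^ Fintype.card ι * e ^ 2 := by ring

lemma abs_det_one_add_sub_one_sub_trace_le (he : e ≤ 1) (hA : ∀ i j, |A i j| ≤ e) :
    |(1 + A).det - 1 - A.trace| ≤
      (4 ^ Fintype.card ι + (Fintype.card ι).factorial * 2 ^ Fintype.card ι) * e ^ 2 := by
  have hdiag : |∏ i, (1 + A) i i - 1 - A.trace| ≤ 4 ^ Fintype.card ι * e ^ 2 := by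
    simpa [Matrix.trace] using
      abs_prod_one_add_sub_one_sub_sum_le Finset.univ he fun i _ => hA i i
  have hrest : |∑ σ ∈ (Finset.univ : Finset (Equiv.Perm ι)).erase 1,
      ((Equiv.Perm.sign σ : ℤ) : ℝ) * ∏ i, (1 + A) (σ i) i| ≤
      (Fintype.card ι).factorial * (2 ^ Fintype.card ι * e ^ 2) := by
    calc _ ≤ ∑ σ ∈ (Finset.univ : Finset (Equiv.Perm ι)).erase 1, |∏ i, (1 + A) (σ i) i| := by
          refine (Finset.abs_sum_le_sum_abs _ _).trans_eq (Finset.sum_congr rfl fun σ _ => ?_)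
          exact abs_sgn_mul _ _
      _ ≤ ((Finset.univ : Finset (Equiv.Perm ι)).erase 1).card •
            (2 ^ Fintype.card ι * e ^ 2) := Finset.sum_le_card_nsmul _ _ _ fun σ hσ =>
          abs_prod_perm_one_add_le he hA (Finset.ne_of_mem_erase hσ)
      _ ≤ _ := by
          rw [nsmul_eq_mul, ← Fintype.card_perm]
          gcongr
          exact Finset.card_le_univ _
  rw [Matrix.det_apply', ← Finset.add_sum_erase _ _ (Finset.mem_univ (1 : Equiv.Perm ι))]
  simp only [Equiv.Perm.sign_one, Units.val_one, Int.cast_one, one_mul, Equiv.Perm.one_apply]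
  rw [abs_le] at *
  constructor <;> linarith

end Determinant

/-! ### Signed flags of the cube -/

/-- A complete flag of faces of the cube: the `m`-th face is cut out by the first `m + 1`
coordinates of the permutation, set to the prescribed signs. -/
abbrev SignedFlag (n : ℕ) := Equiv.Perm (Fin n) × (Fin n → ℤˣ)

section Flags

variable {n : ℕ}

/-- The center of the `m`-th face of a flag. Together with the origin, these points span the
simplex of the barycentric triangulation of the cube that belongs to the flag. -/
def faceCenter (f : SignedFlag n) (m : Fin n) : Fin n → ℝ :=
  fun i => if f.1.symm i ≤ m then sgn (f.2 i) else 0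

/-- The center of the face preceding the `m`-th one, the origin for `m = 0`. -/
def prevFaceCenter (f : SignedFlag n) (m : Fin n) : Fin n → ℝ :=
  fun i => if f.1.symm i < m then sgn (f.2 i) else 0

/-- The matrix whose columns are the face centers of a flag moved by `Y`. -/
def flagMatrix (Y : (Fin n → ℝ) → (Fin n → ℝ)) (f : SignedFlag n) : Matrix (Fin n) (Fin n) ℝ :=
  Matrix.of fun i m => Y (faceCenter f m) i

/-- The differences of consecutive columns of `flagMatrix Y f`, with the rows signed and permuted
so that the undisplaced flag gives the identity. -/
def flagIncrementMatrix (Y : (Fin n → ℝ) → (Fin n → ℝ)) (f : SignedFlag n) :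
    Matrix (Fin n) (Fin n) ℝ :=
  Matrix.of fun l m =>
    sgn (f.2 (f.1 l)) * (Y (faceCenter f m) (f.1 l) - Y (prevFaceCenter f m) (f.1 l))

lemma faceCenter_apply_perm (f : SignedFlag n) (m l : Fin n) :
    faceCenter f m (f.1 l) = if l ≤ m then sgn (f.2 (f.1 l)) else 0 := by
  simp [faceCenter]

lemma prevFaceCenter_apply_perm (f : SignedFlag n) (m l : Fin n) :
    prevFaceCenter f m (f.1 l) = if l < m then sgn (f.2 (f.1 l)) else 0 := by
  simp [prevFaceCenter]

lemma prevFaceCenter_zero (f : SignedFlag (n + 1)) : prevFaceCenter f 0 = 0 := by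
  ext i; simp [prevFaceCenter]

lemma prevFaceCenter_succ (f : SignedFlag (n + 1)) (m : Fin n) :
    prevFaceCenter f m.succ = faceCenter f m.castSucc := by
  ext i; simp [prevFaceCenter, faceCenter, Fin.lt_def, Fin.le_def]

lemma prevFaceCenter_eq_zero_or (f : SignedFlag n) (m : Fin n) :
    prevFaceCenter f m = 0 ∨ ∃ k, prevFaceCenter f m = faceCenter f k := by
  rcases n with _ | n
  · exact m.elim0
  · induction m using Fin.cases with
    | zero => exact Or.inl (prevFaceCenter_zero f)
    | succ m => exact Or.inr ⟨_, prevFaceCenter_succ f m⟩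

lemma abs_det_flagMatrix {Y : (Fin n → ℝ) → (Fin n → ℝ)} (hY : Y 0 = 0) (f : SignedFlag n) :
    |(flagMatrix Y f).det| = |(flagIncrementMatrix Y f).det| := by
  rcases n with _ | n
  · simp
  let A : Matrix (Fin (n + 1)) (Fin (n + 1)) ℝ :=
    Matrix.of fun i m => Y (faceCenter f m) i - Y (prevFaceCenter f m) i
  have hcol : (flagMatrix Y f).det = A.det :=
    Matrix.det_eq_of_forall_col_eq_smul_add_pred (fun _ => 1)
      (fun i => by simp [flagMatrix, A, prevFaceCenter_zero, hY])
      (fun i j => by simp [flagMatrix, A, prevFaceCenter_succ])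
  have hrow : flagIncrementMatrix Y f =
      Matrix.of fun l m => sgn (f.2 (f.1 l)) * (A.submatrix f.1 id) l m := by
    ext l m; simp [flagIncrementMatrix, A]
  have hsign : |((Equiv.Perm.sign f.1 : ℤ) : ℝ)| = 1 := abs_sgn _
  rw [hcol, hrow, Matrix.det_mul_column, Matrix.det_permute, abs_mul, abs_mul, hsign,
    Finset.abs_prod]
  simp only [abs_sgn, Finset.prod_const_one, one_mul]

lemma flagIncrementMatrix_id (f : SignedFlag n) : flagIncrementMatrix id f = 1 := by
  ext l m
  simp only [flagIncrementMatrix, Matrix.of_apply, id, faceCenter_apply_perm,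
    prevFaceCenter_apply_perm, Matrix.one_apply]
  rcases lt_trichotomy l m with h | h | h
  · simp [h, h.le, h.ne]
  · simp [h, sgn_mul_self]
  · simp [h.not_gt, h.not_ge, h.ne']

lemma one_add_flagIncrementMatrix_sub_id (Y : (Fin n → ℝ) → (Fin n → ℝ)) (f : SignedFlag n) :
    1 + flagIncrementMatrix (Y - id) f = flagIncrementMatrix Y f := by
  rw [← flagIncrementMatrix_id f]
  ext l m
  simp only [flagIncrementMatrix, Matrix.add_apply, Matrix.of_apply, id, Pi.sub_apply]
  ring

lemma sum_sgn_mul_prevFaceCenter_eq_zero (e : (Fin n → ℝ) → (Fin n → ℝ)) (m : Fin n) :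
    ∑ f : SignedFlag n, sgn (f.2 (f.1 m)) * e (prevFaceCenter f m) (f.1 m) = 0 := by
  rw [Fintype.sum_prod_type]
  refine Finset.sum_eq_zero fun σ _ => ?_
  -- Flipping the sign of the coordinate `σ m` negates the summand.
  let flip : (Fin n → ℤˣ) ≃ (Fin n → ℤˣ) := Equiv.mulRight (Pi.mulSingle (σ m) (-1))
  have hprev (ε : Fin n → ℤˣ) : prevFaceCenter (σ, flip ε) m = prevFaceCenter (σ, ε) m := by
    ext i
    simp only [prevFaceCenter]
    split_ifs with hi
    · have hne : i ≠ σ m := by rintro rfl; simp at hi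
      simp [flip, Pi.mulSingle_eq_of_ne hne]
    · rfl
  have hflip := Equiv.sum_comp flip
    fun ε => sgn (ε (σ m)) * e (prevFaceCenter (σ, ε) m) (σ m)
  have hsgn (ε : Fin n → ℤˣ) : sgn (flip ε (σ m)) = -sgn (ε (σ m)) := by simp [flip, sgn]
  simp only [hprev, hsgn, neg_mul, Finset.sum_neg_distrib] at hflip
  simp only
  linarith

lemma faceCenter_mul_swap (f : SignedFlag n) {l m : Fin n} (hl : l ≤ m) :
    faceCenter (f.1 * Equiv.swap l m, f.2) m = faceCenter f m := by
  ext i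
  have hsymm : (f.1 * Equiv.swap l m).symm i = Equiv.swap l m (f.1.symm i) := by
    rw [Equiv.symm_apply_eq]; simp
  have hle : Equiv.swap l m (f.1.symm i) ≤ m ↔ f.1.symm i ≤ m := by
    rw [Equiv.swap_apply_def]
    split_ifs with h1 h2
    · simp [h1, hl]
    · simp [h2, hl]
    · rfl
  simp [faceCenter, hsymm, hle]

lemma sum_sgn_mul_faceCenter_swap (e : (Fin n → ℝ) → (Fin n → ℝ)) {l m : Fin n} (hl : l ≤ m) :
    ∑ f : SignedFlag n, sgn (f.2 (f.1 m)) * e (faceCenter f m) (f.1 m) =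
      ∑ f : SignedFlag n, sgn (f.2 (f.1 l)) * e (faceCenter f m) (f.1 l) := by
  rw [← Equiv.sum_comp ((Equiv.mulRight (Equiv.swap l m)).prodCongr (Equiv.refl (Fin n → ℤˣ)))]
  refine Finset.sum_congr rfl fun f _ => ?_
  have hf : (Equiv.mulRight (Equiv.swap l m)).prodCongr (Equiv.refl (Fin n → ℤˣ)) f =
      (f.1 * Equiv.swap l m, f.2) := rfl
  rw [hf, faceCenter_mul_swap f hl]
  simp

lemma faceCenter_dotProduct (f : SignedFlag n) (m : Fin n) (v : Fin n → ℝ) :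
    faceCenter f m ⬝ᵥ v = ∑ l ∈ Finset.Iic m, sgn (f.2 (f.1 l)) * v (f.1 l) := by
  have hIic : Finset.Iic m = Finset.univ.filter (· ≤ m) := by ext; simp
  rw [dotProduct, ← Equiv.sum_comp f.1, hIic, Finset.sum_filter]
  simp only [faceCenter_apply_perm, ite_mul, zero_mul]

lemma sum_trace_flagIncrementMatrix (e : (Fin n → ℝ) → (Fin n → ℝ)) :
    ∑ f : SignedFlag n, (flagIncrementMatrix e f).trace =
      ∑ f : SignedFlag n, ∑ m : Fin n,
        (1 / ((m : ℝ) + 1)) * (faceCenter f m ⬝ᵥ e (faceCenter f m)) := by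
  simp only [Matrix.trace, Matrix.diag_apply, flagIncrementMatrix, Matrix.of_apply]
  rw [Finset.sum_comm, Finset.sum_comm (s := Finset.univ (α := SignedFlag n))]
  refine Finset.sum_congr rfl fun m _ => ?_
  simp only [mul_sub, Finset.sum_sub_distrib, sum_sgn_mul_prevFaceCenter_eq_zero, sub_zero]
  rw [← Finset.mul_sum, one_div, inv_mul_eq_div, _root_.eq_div_iff (by positivity)]
  simp only [faceCenter_dotProduct]
  rw [Finset.sum_comm, Finset.sum_congr rfl fun l hl =>
    (sum_sgn_mul_faceCenter_swap e (Finset.mem_Iic.1 hl)).symm]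
  simp [mul_comm]

/-! ### Coordinates with respect to a displaced flag -/

/-- `t l + t (l + 1) + ⋯`; up to sign, the coordinates of a point with coefficients `t` in the
face centers of a flag. -/
def tailSum (t : Fin n → ℝ) (l : Fin n) : ℝ := ∑ m ∈ Finset.Ici l, t m

lemma tailSum_eq_add_sum_Ioi (t : Fin n → ℝ) (l : Fin n) :
    tailSum t l = t l + ∑ m ∈ Finset.Ioi l, t m := by
  rw [tailSum, ← Finset.Ioi_insert, Finset.sum_insert (by simp)]

lemma tailSum_eq_or (t : Fin n → ℝ) (l : Fin n) :
    tailSum t l = t l ∨ ∃ l', l < l' ∧ tailSum t l = t l + tailSum t l' := by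
  rw [tailSum_eq_add_sum_Ioi]
  by_cases h : IsMax l
  · left
    rw [Finset.Ioi_eq_empty.2 h, Finset.sum_empty, add_zero]
  · right
    exact ⟨Order.succ l, Order.lt_succ_of_not_isMax h, by
      rw [tailSum, Finset.Ici_succ_eq_Ioi_of_not_isMax h]⟩

lemma le_tailSum {t : Fin n → ℝ} (ht : ∀ m, 0 ≤ t m) (l : Fin n) : t l ≤ tailSum t l :=
  Finset.single_le_sum (fun m _ => ht m) (Finset.mem_Ici.2 le_rfl)

lemma tailSum_pos {t : Fin n → ℝ} (ht : ∀ m, 0 < t m) (l : Fin n) : 0 < tailSum t l :=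
  (ht l).trans_le (le_tailSum (fun m => (ht m).le) l)

lemma tailSum_add_le_of_lt {t : Fin n → ℝ} (ht : ∀ m, 0 ≤ t m) {l l' : Fin n} (h : l < l') :
    tailSum t l' + t l ≤ tailSum t l := by
  rw [tailSum_eq_add_sum_Ioi t l, add_comm]
  have hsub : Finset.Ici l' ⊆ Finset.Ioi l := fun m hm =>
    Finset.mem_Ioi.2 (h.trans_le (Finset.mem_Ici.1 hm))
  gcongr
  exact Finset.sum_le_sum_of_subset_of_nonneg hsub fun m _ _ => ht m

lemma tailSum_antitone {t : Fin n → ℝ} (ht : ∀ m, 0 ≤ t m) : Antitone (tailSum t) :=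
  antitone_iff_forall_lt.2 fun l _ h => by linarith [tailSum_add_le_of_lt ht h, ht l]

/-- The point with coefficients `t` in the face centers of the flag `f`. -/
def flagPoint (f : SignedFlag n) (t : Fin n → ℝ) : Fin n → ℝ := flagMatrix id f *ᵥ t

lemma flagPoint_apply (f : SignedFlag n) (t : Fin n → ℝ) (i : Fin n) :
    flagPoint f t i = sgn (f.2 i) * tailSum t (f.1.symm i) := by
  have hIci : Finset.Ici (f.1.symm i) = Finset.univ.filter (f.1.symm i ≤ ·) := by ext; simp
  rw [flagPoint, Matrix.mulVec, dotProduct, tailSum, hIci, Finset.sum_filter, Finset.mul_sum]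
  refine Finset.sum_congr rfl fun m _ => ?_
  simp [flagMatrix, faceCenter]

lemma sgn_mul_flagPoint (f : SignedFlag n) (t : Fin n → ℝ) (i : Fin n) :
    sgn (f.2 i) * flagPoint f t i = tailSum t (f.1.symm i) := by
  rw [flagPoint_apply, sgn_mul_sgn_mul]

lemma abs_flagPoint (f : SignedFlag n) {t : Fin n → ℝ} (ht : ∀ m, 0 < t m) (i : Fin n) :
    |flagPoint f t i| = tailSum t (f.1.symm i) := by
  rw [flagPoint_apply, abs_sgn_mul, abs_of_pos (tailSum_pos ht _)]

/-- `Y` moves every face center by at most `η` in the supremum norm. -/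
def MovesFaceCentersBy (Y : (Fin n → ℝ) → (Fin n → ℝ)) (η : ℝ) : Prop :=
  ∀ f m i, |Y (faceCenter f m) i - faceCenter f m i| ≤ η

lemma flagMatrix_mulVec (Y : (Fin n → ℝ) → (Fin n → ℝ)) (f : SignedFlag n) (t : Fin n → ℝ) :
    flagMatrix Y f *ᵥ t = ∑ m, t m • Y (faceCenter f m) := by
  ext i
  simp [flagMatrix, Matrix.mulVec, dotProduct, mul_comm]

lemma flagMatrix_mulVec_eq_flagPoint_add (Y : (Fin n → ℝ) → (Fin n → ℝ)) (f : SignedFlag n)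
    (t : Fin n → ℝ) (i : Fin n) :
    (flagMatrix Y f *ᵥ t) i =
      flagPoint f t i + ∑ m, t m * (Y (faceCenter f m) i - faceCenter f m i) := by
  rw [flagPoint, flagMatrix_mulVec, flagMatrix_mulVec, Finset.sum_apply, Finset.sum_apply,
    ← Finset.sum_add_distrib]
  refine Finset.sum_congr rfl fun m _ => ?_
  simp only [Pi.smul_apply, smul_eq_mul, id]
  ring

section Displaced

variable {Y : (Fin n → ℝ) → (Fin n → ℝ)} {η : ℝ} {f : SignedFlag n} {μ y : Fin n → ℝ}

lemma abs_tailSum_sub_le (hY : MovesFaceCentersBy Y η) (hμ : flagMatrix Y f *ᵥ μ = y)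
    (l : Fin n) : |tailSum μ l - sgn (f.2 (f.1 l)) * y (f.1 l)| ≤ η * ∑ m, |μ m| := by
  have herr : |∑ m, μ m * (Y (faceCenter f m) (f.1 l) - faceCenter f m (f.1 l))| ≤
      η * ∑ m, |μ m| := by
    rw [Finset.mul_sum]
    refine (Finset.abs_sum_le_sum_abs _ _).trans (Finset.sum_le_sum fun m _ => ?_)
    rw [abs_mul, mul_comm]
    gcongr
    exact hY f m _
  have hdiff : sgn (f.2 (f.1 l)) * y (f.1 l) - tailSum μ l = sgn (f.2 (f.1 l)) *
      ∑ m, μ m * (Y (faceCenter f m) (f.1 l) - faceCenter f m (f.1 l)) := by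
    rw [← hμ, flagMatrix_mulVec_eq_flagPoint_add, mul_add, sgn_mul_flagPoint,
      Equiv.symm_apply_apply, add_sub_cancel_left]
  rwa [abs_sub_comm, hdiff, abs_sgn_mul]

lemma sum_abs_le_of_flagMatrix_mulVec_eq (hY : MovesFaceCentersBy Y η) (hη : 4 * n * η ≤ 1)
    (hμ : flagMatrix Y f *ᵥ μ = y) {U : ℝ} (hU : ∀ i, |y i| ≤ U) : ∑ m, |μ m| ≤ 4 * n * U := by
  set M := ∑ m, |μ m|
  have htail (l : Fin n) : |tailSum μ l| ≤ U + η * M := by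
    have h1 := abs_tailSum_sub_le hY hμ l
    have h2 := hU (f.1 l)
    rw [← abs_sgn_mul (f.2 (f.1 l))] at h2
    rw [abs_le] at h1 h2 ⊢
    constructor <;> linarith
  have hcoord (l : Fin n) : |μ l| ≤ 2 * (U + η * M) := by
    rcases tailSum_eq_or μ l with h | ⟨l', -, h⟩
    · rw [← h]; linarith [htail l, abs_nonneg (tailSum μ l)]
    · rw [← sub_eq_iff_eq_add.2 h]
      linarith [abs_sub (tailSum μ l) (tailSum μ l'), htail l, htail l']
  have hsum : M ≤ n * (2 * (U + η * M)) := by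
    simpa using Finset.sum_le_card_nsmul Finset.univ (fun m => |μ m|) _ fun m _ => hcoord m
  have hM : 0 ≤ M := Finset.sum_nonneg fun _ _ => abs_nonneg _
  nlinarith [mul_le_mul_of_nonneg_right hη hM]

lemma flagMatrix_mulVec_injective (hY : MovesFaceCentersBy Y η) (hη : 4 * n * η ≤ 1)
    (f : SignedFlag n) : Function.Injective (flagMatrix Y f).mulVecLin := by
  rw [injective_iff_map_eq_zero]
  intro μ hμ
  have hsum : ∑ m, |μ m| ≤ 0 := by
    simpa using sum_abs_le_of_flagMatrix_mulVec_eq hY hη hμ (U := 0) (by simp)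
  ext m
  have hm := Finset.single_le_sum (fun m _ => abs_nonneg (μ m)) (Finset.mem_univ m)
  exact abs_nonpos_iff.1 (hm.trans hsum)

lemma exists_flagMatrix_mulVec_eq (hY : MovesFaceCentersBy Y η) (hη : 4 * n * η ≤ 1)
    (f : SignedFlag n) (y : Fin n → ℝ) : ∃ μ, flagMatrix Y f *ᵥ μ = y :=
  LinearMap.injective_iff_surjective.1 (flagMatrix_mulVec_injective hY hη f) y

end Displaced

lemma sgn_eq_neg_of_ne {u v : ℤˣ} (h : sgn u ≠ sgn v) : sgn u = -sgn v := by
  rcases sgn_eq_one_or u with hu | hu <;> rcases sgn_eq_one_or v with hv | hv <;> simp_all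

lemma faceCenter_ne_zero_iff {f : SignedFlag n} {m i : Fin n} :
    faceCenter f m i ≠ 0 ↔ f.1.symm i ≤ m := by
  simp [faceCenter, sgn_ne_zero]

lemma faceCenter_eq_zero_iff {f : SignedFlag n} {m i : Fin n} :
    faceCenter f m i = 0 ↔ m < f.1.symm i := by
  rw [← not_le, ← faceCenter_ne_zero_iff, not_not]

lemma abs_faceCenter_le_one (f : SignedFlag n) (m i : Fin n) : |faceCenter f m i| ≤ 1 := by
  simp only [faceCenter]; split_ifs <;> simp [abs_sgn]

lemma faceCenter_injective (f : SignedFlag n) : Function.Injective (faceCenter f) := by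
  intro m m' h
  have hle (k : Fin n) : k ≤ m ↔ k ≤ m' := by
    simpa [faceCenter_ne_zero_iff] using congrArg (fun v => v (f.1 k) ≠ 0) h
  exact le_antisymm ((hle m).1 le_rfl) ((hle m').2 le_rfl)

open Classical in
/-- The coefficient of the vector `s` in the point with coefficients `t` in the face centers
of `f`; zero if `s` is not a face center of `f`. -/
def flagCoord (f : SignedFlag n) (t s : Fin n → ℝ) : ℝ :=
  ∑ m, if s = faceCenter f m then t m else 0

lemma flagCoord_faceCenter (f : SignedFlag n) (t : Fin n → ℝ) (k : Fin n) :
    flagCoord f t (faceCenter f k) = t k := by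
  simp [flagCoord, (faceCenter_injective f).eq_iff]

lemma flagCoord_eq_zero {f : SignedFlag n} {s : Fin n → ℝ} (t : Fin n → ℝ)
    (hs : ∀ m, s ≠ faceCenter f m) : flagCoord f t s = 0 := by
  simp [flagCoord, hs]

lemma flagCoord_nonneg (f : SignedFlag n) {t : Fin n → ℝ} (ht : ∀ m, 0 ≤ t m) (s : Fin n → ℝ) :
    0 ≤ flagCoord f t s := by
  refine Finset.sum_nonneg fun m _ => ?_
  split_ifs
  exacts [ht m, le_rfl]

lemma faceCenter_mul_flagPoint {f : SignedFlag n} (t : Fin n → ℝ) {k i : Fin n}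
    (hi : f.1.symm i ≤ k) : faceCenter f k i * flagPoint f t i = tailSum t (f.1.symm i) := by
  rw [faceCenter, if_pos hi, sgn_mul_flagPoint]

lemma le_faceCenter_mul_flagPoint (f : SignedFlag n) {t : Fin n → ℝ} (ht : ∀ m, 0 < t m)
    {k i : Fin n} (hi : faceCenter f k i ≠ 0) : t k ≤ faceCenter f k i * flagPoint f t i := by
  have hik := faceCenter_ne_zero_iff.1 hi
  have ht0 : ∀ m, 0 ≤ t m := fun m => (ht m).le
  rw [faceCenter_mul_flagPoint t hik]
  exact (le_tailSum ht0 k).trans (tailSum_antitone ht0 hik)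

lemma le_faceCenter_mul_flagPoint_sub_abs (f : SignedFlag n) {t : Fin n → ℝ} (ht : ∀ m, 0 < t m)
    {k i j : Fin n} (hi : faceCenter f k i ≠ 0) (hj : faceCenter f k j = 0) :
    t k ≤ faceCenter f k i * flagPoint f t i - |flagPoint f t j| := by
  have hik := faceCenter_ne_zero_iff.1 hi
  have ht0 : ∀ m, 0 ≤ t m := fun m => (ht m).le
  rw [faceCenter_mul_flagPoint t hik, abs_flagPoint f ht]
  linarith [tailSum_antitone ht0 hik, tailSum_add_le_of_lt ht0 (faceCenter_eq_zero_iff.1 hj)]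

lemma exists_le_flagCoord_of_eq {g : SignedFlag n} {r : Fin n → ℝ} (hr : ∀ m, 0 < r m)
    (m : Fin n) : ∃ i, faceCenter g m i ≠ 0 ∧
      (faceCenter g m i * flagPoint g r i ≤ r m ∨
        ∃ j, faceCenter g m j = 0 ∧
          faceCenter g m i * flagPoint g r i - |flagPoint g r j| ≤ r m) := by
  refine ⟨g.1 m, by simp [faceCenter_ne_zero_iff], ?_⟩
  rw [faceCenter_mul_flagPoint r (by simp), Equiv.symm_apply_apply]
  rcases tailSum_eq_or r m with h | ⟨l, hl, h⟩
  · exact Or.inl h.le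
  · refine Or.inr ⟨g.1 l, by simpa [faceCenter_eq_zero_iff] using hl, ?_⟩
    rw [abs_flagPoint g hr, Equiv.symm_apply_apply, h, add_sub_cancel_right]

lemma exists_mem_support_last {g h : SignedFlag n} {k : Fin n}
    (hne : ∀ m, faceCenter h k ≠ faceCenter g m)
    (hsgn : ∀ i, faceCenter h k i ≠ 0 → faceCenter h k i = sgn (g.2 i)) :
    ∃ i j, faceCenter h k i ≠ 0 ∧ faceCenter h k j = 0 ∧ g.1.symm j ≤ g.1.symm i := by
  have hsupp : (Finset.univ.filter fun i => faceCenter h k i ≠ 0).Nonempty :=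
    ⟨h.1 k, by simp [faceCenter_ne_zero_iff]⟩
  obtain ⟨i, hi, himax⟩ := Finset.exists_max_image _ (fun i => g.1.symm i) hsupp
  simp only [Finset.mem_filter, Finset.mem_univ, true_and] at hi himax
  suffices ∃ j, faceCenter h k j = 0 ∧ g.1.symm j ≤ g.1.symm i by
    obtain ⟨j, hj, hji⟩ := this
    exact ⟨i, j, hi, hj, hji⟩
  by_contra! hcon
  refine hne (g.1.symm i) (funext fun j => ?_)
  rw [faceCenter.eq_def g]
  split_ifs with hji
  · exact hsgn j fun h0 => absurd hji (not_le.2 (hcon j h0))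
  · by_contra hj; exact hji (himax j hj)

-- At a point `p` of the cone of `g`, the coefficient of a face center `s` is
-- `max 0 (min_{sᵢ ≠ 0} sᵢ pᵢ - max_{sⱼ = 0} |pⱼ|)`, a `2`-Lipschitz function of `p`; this and
-- the two preceding lower bounds are the two halves of that formula.
lemma exists_le_flagCoord (g h : SignedFlag n) {r : Fin n → ℝ} (hr : ∀ m, 0 < r m) (k : Fin n) :
    ∃ i, faceCenter h k i ≠ 0 ∧
      (faceCenter h k i * flagPoint g r i ≤ flagCoord g r (faceCenter h k) ∨
        ∃ j, faceCenter h k j = 0 ∧ faceCenter h k i * flagPoint g r i - |flagPoint g r j| ≤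
          flagCoord g r (faceCenter h k)) := by
  by_cases hc : ∃ m, faceCenter h k = faceCenter g m
  · obtain ⟨m, hm⟩ := hc
    rw [hm, flagCoord_faceCenter]
    exact exists_le_flagCoord_of_eq hr m
  push Not at hc
  rw [flagCoord_eq_zero r hc]
  by_cases hsgn : ∀ i, faceCenter h k i ≠ 0 → faceCenter h k i = sgn (g.2 i)
  · obtain ⟨i, j, hi, hj, hji⟩ := exists_mem_support_last hc hsgn
    refine ⟨i, hi, Or.inr ⟨j, hj, ?_⟩⟩
    rw [abs_flagPoint g hr, hsgn i hi, sgn_mul_flagPoint]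
    linarith [tailSum_antitone (fun m => (hr m).le) hji]
  · push Not at hsgn
    obtain ⟨i, hi, hne⟩ := hsgn
    refine ⟨i, hi, Or.inl ?_⟩
    rw [faceCenter, if_pos (faceCenter_ne_zero_iff.1 hi)] at hne ⊢
    rw [sgn_eq_neg_of_ne hne, neg_mul, sgn_mul_flagPoint]
    linarith [tailSum_pos hr (g.1.symm i)]

lemma flagCoord_le_add_norm (f g h : SignedFlag n) {t r : Fin n → ℝ} (ht : ∀ m, 0 < t m)
    (hr : ∀ m, 0 < r m) (k : Fin n) : flagCoord f t (faceCenter h k) ≤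
      flagCoord g r (faceCenter h k) + 2 * ‖flagPoint f t - flagPoint g r‖ := by
  set s := faceCenter h k with hs
  set d := ‖flagPoint f t - flagPoint g r‖
  have hd (i : Fin n) : |flagPoint f t i - flagPoint g r i| ≤ d :=
    norm_le_pi_norm (flagPoint f t - flagPoint g r) i
  have hd0 : 0 ≤ d := norm_nonneg _
  by_cases hc : ∃ m, s = faceCenter f m
  · obtain ⟨m, hm⟩ := hc
    obtain ⟨i, hi, hor⟩ := exists_le_flagCoord g h hr k
    rw [← hs] at hi hor
    have hmul : s i * flagPoint f t i ≤ s i * flagPoint g r i + d := by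
      have habs : |s i * (flagPoint f t i - flagPoint g r i)| ≤ 1 * d := by
        rw [abs_mul]
        exact mul_le_mul (abs_faceCenter_le_one h k i) (hd i) (abs_nonneg _) one_pos.le
      linarith [(abs_le.1 habs).2]
    have hcoord : flagCoord f t s = t m := by rw [hm, flagCoord_faceCenter]
    rw [hcoord]
    rcases hor with hle | ⟨j, hj, hle⟩
    · have hlow := le_faceCenter_mul_flagPoint f ht (hm ▸ hi)
      rw [← hm] at hlow
      linarith
    · have hlow := le_faceCenter_mul_flagPoint_sub_abs f ht (hm ▸ hi) (hm ▸ hj)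
      rw [← hm] at hlow
      have hj' := abs_sub_abs_le_abs_sub (flagPoint g r j) (flagPoint f t j)
      rw [abs_sub_comm] at hj'
      linarith [hd j]
  · push Not at hc
    rw [flagCoord_eq_zero t hc]
    linarith [flagCoord_nonneg g (fun m => (hr m).le) s]

lemma abs_flagCoord_sub_le (f g h : SignedFlag n) {t r : Fin n → ℝ} (ht : ∀ m, 0 < t m)
    (hr : ∀ m, 0 < r m) (k : Fin n) :
    |flagCoord g r (faceCenter h k) - flagCoord f t (faceCenter h k)| ≤
      2 * ‖flagPoint f t - flagPoint g r‖ := by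
  have h1 := flagCoord_le_add_norm f g h ht hr k
  have h2 := flagCoord_le_add_norm g f h hr ht k
  rw [norm_sub_rev] at h2
  rw [abs_le]
  constructor <;> linarith

lemma flagMatrix_mulVec_eq_sum_flagCoord (Y : (Fin n → ℝ) → (Fin n → ℝ)) (f : SignedFlag n)
    (t : Fin n → ℝ) {S : Finset (Fin n → ℝ)} (hS : ∀ m, faceCenter f m ∈ S) (i : Fin n) :
    (flagMatrix Y f *ᵥ t) i = flagPoint f t i + ∑ s ∈ S, flagCoord f t s * (Y s i - s i) := by
  classical
  rw [flagMatrix_mulVec_eq_flagPoint_add]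
  simp only [flagCoord, Finset.sum_mul]
  rw [Finset.sum_comm (s := S)]
  congr 1
  refine Finset.sum_congr rfl fun m _ => ?_
  rw [Finset.sum_eq_single_of_mem _ (hS m) fun s _ hs => by simp [hs]]
  simp

section Disjoint

variable {Y : (Fin n → ℝ) → (Fin n → ℝ)} {η : ℝ} {f g : SignedFlag n} {t r : Fin n → ℝ}

lemma abs_flagPoint_sub_flagPoint_le (hY : MovesFaceCentersBy Y η)
    (ht : ∀ m, 0 < t m) (hr : ∀ m, 0 < r m)
    (heq : flagMatrix Y f *ᵥ t = flagMatrix Y g *ᵥ r) (i : Fin n) :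
    |flagPoint f t i - flagPoint g r i| ≤
      2 * n * (2 * ‖flagPoint f t - flagPoint g r‖ * η) := by
  classical
  let S : Finset (Fin n → ℝ) := Finset.univ.image (faceCenter f) ∪ Finset.univ.image (faceCenter g)
  have hcard : (S.card : ℝ) ≤ 2 * n := by
    have h := Finset.card_union_le (Finset.univ.image (faceCenter f))
      (Finset.univ.image (faceCenter g))
    simp only [Finset.card_image_of_injective _ (faceCenter_injective _), Finset.card_univ,
      Fintype.card_fin] at h
    exact_mod_cast h.trans_eq (two_mul n).symm
  have hdiff : flagPoint f t i - flagPoint g r i =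
      ∑ s ∈ S, (flagCoord g r s - flagCoord f t s) * (Y s i - s i) := by
    have h := congrFun heq i
    rw [flagMatrix_mulVec_eq_sum_flagCoord Y f t (S := S) (by simp [S]),
      flagMatrix_mulVec_eq_sum_flagCoord Y g r (S := S) (by simp [S])] at h
    simp only [sub_mul, Finset.sum_sub_distrib] at h ⊢
    linarith
  have hη : 0 ≤ η := (abs_nonneg _).trans (hY f i i)
  have hterm : ∀ s ∈ S, |(flagCoord g r s - flagCoord f t s) * (Y s i - s i)| ≤
      2 * ‖flagPoint f t - flagPoint g r‖ * η := by
    intro s hs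
    obtain ⟨h, k, rfl⟩ : ∃ h k, s = faceCenter h k := by
      simp only [S, Finset.mem_union, Finset.mem_image, Finset.mem_univ, true_and] at hs
      rcases hs with ⟨k, rfl⟩ | ⟨k, rfl⟩ <;> exact ⟨_, k, rfl⟩
    rw [abs_mul]
    exact mul_le_mul (abs_flagCoord_sub_le f g h ht hr k) (hY h k i) (abs_nonneg _) (by positivity)
  calc |flagPoint f t i - flagPoint g r i|
      ≤ S.card • (2 * ‖flagPoint f t - flagPoint g r‖ * η) := by
        rw [hdiff]
        exact (Finset.abs_sum_le_sum_abs _ _).trans (Finset.sum_le_card_nsmul _ _ _ hterm)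
    _ ≤ 2 * n * (2 * ‖flagPoint f t - flagPoint g r‖ * η) := by
        rw [nsmul_eq_mul]; gcongr

lemma flagPoint_eq_of_flagMatrix_mulVec_eq (hY : MovesFaceCentersBy Y η) (hη : 8 * n * η ≤ 1)
    (ht : ∀ m, 0 < t m) (hr : ∀ m, 0 < r m)
    (heq : flagMatrix Y f *ᵥ t = flagMatrix Y g *ᵥ r) : flagPoint f t = flagPoint g r := by
  rcases n with _ | n
  · exact Subsingleton.elim _ _
  have hbound := abs_flagPoint_sub_flagPoint_le hY ht hr heq
  set d := ‖flagPoint f t - flagPoint g r‖ with hd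
  have hd0 : 0 ≤ d := norm_nonneg _
  have hle : d ≤ 2 * (n + 1 : ℕ) * (2 * d * η) :=
    (pi_norm_le_iff_of_nonneg ((abs_nonneg _).trans (hbound 0))).2 hbound
  have hzero : d = 0 := by nlinarith [mul_le_mul_of_nonneg_right hη hd0]
  rwa [hd, norm_eq_zero, sub_eq_zero] at hzero

lemma strictAnti_abs_flagPoint (f : SignedFlag n) (ht : ∀ m, 0 < t m) :
    StrictAnti fun l => |flagPoint f t (f.1 l)| := fun l l' hl => by
  simp only [abs_flagPoint f ht, Equiv.symm_apply_apply]
  linarith [tailSum_add_le_of_lt (fun m => (ht m).le) hl, ht l]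

lemma eq_of_flagPoint_eq (ht : ∀ m, 0 < t m) (hr : ∀ m, 0 < r m)
    (heq : flagPoint f t = flagPoint g r) : f = g := by
  have hf := strictAnti_abs_flagPoint f ht
  have hg := strictAnti_abs_flagPoint g hr
  have hperm : f.1 = g.1 := by
    have hrange : Set.range (fun l => |flagPoint g r (f.1 l)|) =
        Set.range (fun l => |flagPoint g r (g.1 l)|) := by
      have hf' := f.1.surjective.range_comp fun i => |flagPoint g r i|
      have hg' := g.1.surjective.range_comp fun i => |flagPoint g r i|
      exact hf'.trans hg'.symm
    rw [heq] at hf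
    have hfun := (StrictAnti.range_inj hf hg).1 hrange
    ext1 l
    have hl := hg.injective (a₁ := g.1.symm (f.1 l)) (a₂ := l) (by simpa using congrFun hfun l)
    rwa [Equiv.symm_apply_eq] at hl
  refine Prod.ext hperm (funext fun i => eq_of_sgn_mul_pos (x := flagPoint f t i) ?_ ?_)
  · rw [sgn_mul_flagPoint]; exact tailSum_pos ht _
  · rw [heq, sgn_mul_flagPoint]; exact tailSum_pos hr _

lemma eq_of_flagMatrix_mulVec_eq (hY : MovesFaceCentersBy Y η) (hη : 8 * n * η ≤ 1)
    (ht : ∀ m, 0 < t m) (hr : ∀ m, 0 < r m)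
    (heq : flagMatrix Y f *ᵥ t = flagMatrix Y g *ᵥ r) : f = g :=
  eq_of_flagPoint_eq ht hr (flagPoint_eq_of_flagMatrix_mulVec_eq hY hη ht hr heq)

end Disjoint

end Flags

/-! ### Volume of a convex set containing a displaced triangulation -/

section Overshoot

variable {ι E : Type*} [Fintype ι] [AddCommGroup E] [Module ℝ E] {Q : Set E} {p : ι → E} {κ : ℝ}

lemma sum_smul_mem_of_sum_le_one (hQ : Convex ℝ Q) (h0 : 0 ∈ Q) (hp : ∀ m, p m ∈ Q) {t : ι → ℝ}
    (ht : ∀ m, 0 ≤ t m) (hsum : ∑ m, t m ≤ 1) : ∑ m, t m • p m ∈ Q := by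
  have h := hQ.sum_mem (t := Finset.univ) (w := fun o : Option ι => o.elim (1 - ∑ m, t m) t)
    (z := fun o : Option ι => o.elim 0 p) ?_ ?_ ?_
  · simpa [Fintype.sum_option] using h
  · rintro (_ | m) _
    · simpa using hsum
    · exact ht m
  · simp [Fintype.sum_option]
  · rintro (_ | m) _
    · exact h0
    · exact hp m

/-- `Q` contains a point whose coefficients in `p` sum to at least `1 + κ`, that is, a point beyond
the hyperplane through `p`, and none of these coefficients is too negative. -/
def HasOvershoot (Q : Set E) (p : ι → E) (κ : ℝ) : Prop :=
  ∃ a : ι → ℝ, (∀ m, -(1 / (Fintype.card ι : ℝ)) ≤ a m) ∧ 1 + κ ≤ ∑ m, a m ∧ ∑ m, a m • p m ∈ Q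

lemma hasOvershoot_zero [Nonempty ι] (hp : ∀ m, p m ∈ Q) : HasOvershoot Q p 0 := by
  classical
  obtain ⟨k⟩ := ‹Nonempty ι›
  refine ⟨Pi.single k 1, fun m => ?_, by simp, ?_⟩
  · have hcard : (0 : ℝ) ≤ 1 / Fintype.card ι := by positivity
    rcases eq_or_ne m k with rfl | h
    · simp only [Pi.single_eq_same]; linarith
    · simp [h]
  · rw [Finset.sum_eq_single k (fun m _ h => by simp [h]) (by simp)]
    simpa using hp k

lemma exists_nonneg_of_hasOvershoot [Nonempty ι] (hQ : Convex ℝ Q) (hp : ∀ m, p m ∈ Q)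
    (h : HasOvershoot Q p κ) :
    ∃ a : ι → ℝ, (∀ m, 0 ≤ a m) ∧ 1 + κ / 2 ≤ ∑ m, a m ∧ ∑ m, a m • p m ∈ Q := by
  obtain ⟨a, ha, hsum, hmem⟩ := h
  have hcard : (0 : ℝ) < Fintype.card ι := by exact_mod_cast Fintype.card_pos
  have hcentroid : ∑ m, (1 / (Fintype.card ι : ℝ)) • p m ∈ Q :=
    hQ.sum_mem (fun _ _ => by positivity) (by simp [hcard.ne']) fun m _ => hp m
  refine ⟨fun m => (1 / 2) * a m + (1 / 2) * (1 / Fintype.card ι), fun m => ?_, ?_, ?_⟩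
  · linarith [ha m]
  · rw [Finset.sum_add_distrib, ← Finset.mul_sum, ← Finset.mul_sum]
    have hone : ∑ _m : ι, 1 / (Fintype.card ι : ℝ) = 1 := by simp [hcard.ne']
    rw [hone]
    linarith
  · simp only [add_smul, mul_smul, Finset.sum_add_distrib, ← Finset.smul_sum]
    rw [← Finset.smul_sum] at hcentroid
    exact hQ hmem hcentroid (by norm_num) (by norm_num) (by norm_num)

end Overshoot

section Region

variable {ι : Type*} [Fintype ι] {k : ℝ}

lemma smul_mem_cornerSimplex_iff {c : ℝ} (hc : 0 < c) {t : ι → ℝ} :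
    t ∈ c • cornerSimplex ι ↔ (∀ i, 0 < t i) ∧ ∑ i, t i < c := by
  simp only [Set.mem_smul_set_iff_inv_smul_mem₀ hc.ne', cornerSimplex, Set.mem_ofPred_eq,
    Pi.smul_apply, smul_eq_mul, ← Finset.mul_sum, inv_mul_lt_iff₀ hc, mul_one]
  simp [hc]

lemma volume_cornerSimplex_ne_top : volume (cornerSimplex ι) ≠ ⊤ := by
  rw [volume_cornerSimplex]
  exact ENNReal.inv_ne_top.2 (by exact_mod_cast Nat.factorial_ne_zero _)

lemma ofReal_mul_volume_le_volume_sdiff_smul [Nonempty ι] (hk0 : 0 ≤ k) (hk1 : k < 1) :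
    ENNReal.ofReal k * volume (cornerSimplex ι) ≤
      volume (cornerSimplex ι \ (1 - k) • cornerSimplex ι) := by
  have hk : 0 < 1 - k := by linarith
  have hsub : (1 - k) • cornerSimplex ι ⊆ cornerSimplex ι := fun t ht => by
    rw [smul_mem_cornerSimplex_iff hk] at ht
    exact ⟨ht.1, ht.2.trans_le (by linarith)⟩
  have hmeas : MeasurableSet ((1 - k) • cornerSimplex ι) :=
    (isOpen_cornerSimplex.smul₀ hk.ne').measurableSet
  rw [measure_sdiff hsub hmeas.nullMeasurableSet
    (measure_ne_top_of_subset hsub volume_cornerSimplex_ne_top), Measure.addHaar_smul,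
    Module.finrank_fintype_fun_eq_card, abs_of_nonneg (by positivity)]
  refine ENNReal.le_sub_of_add_le_right
    (ENNReal.mul_ne_top ENNReal.ofReal_ne_top volume_cornerSimplex_ne_top) ?_
  have hpow : (1 - k) ^ Fintype.card ι ≤ 1 - k :=
    pow_le_of_le_one hk.le (by linarith) Fintype.card_ne_zero
  rw [← add_mul, ← ENNReal.ofReal_add hk0 (by positivity)]
  refine mul_le_of_le_one_left' (ENNReal.ofReal_le_one.2 ?_)
  linarith

lemma volume_preimage_two_smul_sub (a : ι → ℝ) (s : Set (ι → ℝ)) :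
    volume ((fun t => (2 : ℝ) • t + -a) ⁻¹' s) =
      ENNReal.ofReal ((1 / 2) ^ Fintype.card ι) * volume s := by
  have hcomp : (fun t => (2 : ℝ) • t + -a) ⁻¹' s =
      (fun t => (2 : ℝ) • t) ⁻¹' ((fun t => t + -a) ⁻¹' s) := rfl
  rw [hcomp, Measure.addHaar_preimage_smul _ two_ne_zero, measure_preimage_add_right,
    Module.finrank_fintype_fun_eq_card, abs_of_nonneg (by positivity), one_div, inv_pow]

lemma exists_region_of_le_sum [Nonempty ι] (hk0 : 0 ≤ k) (hk1 : k < 1) {a : ι → ℝ}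
    (ha : ∀ m, 0 ≤ a m) (hsum : 1 + k ≤ ∑ m, a m) :
    ∃ W ⊆ convexHull ℝ (insert a (cornerSimplex ι)), MeasurableSet W ∧
      (∀ t ∈ W, ∀ m, 0 < t m) ∧
      ENNReal.ofReal (1 + (1 / 2) ^ Fintype.card ι * k) * volume (cornerSimplex ι) ≤
        volume W := by
  have hk : 0 < 1 - k := by linarith
  let shell := cornerSimplex ι \ (1 - k) • cornerSimplex ι
  -- the midpoints between `a` and the points of the outer shell of the simplex
  let mid := (fun t => (2 : ℝ) • t + -a) ⁻¹' shell
  have hmeas : MeasurableSet mid :=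
    (isOpen_cornerSimplex.measurableSet.diff
      (isOpen_cornerSimplex.smul₀ hk.ne').measurableSet).preimage (by fun_prop)
  have hdisj : Disjoint (cornerSimplex ι) mid := by
    rw [Set.disjoint_left]
    rintro t ht ⟨hb, hshell⟩
    refine hshell ((smul_mem_cornerSimplex_iff hk).2 ⟨hb.1, ?_⟩)
    simp only [Pi.add_apply, Pi.smul_apply, Pi.neg_apply, smul_eq_mul, Finset.sum_add_distrib,
      Finset.sum_neg_distrib, ← Finset.mul_sum]
    linarith [ht.2]
  refine ⟨cornerSimplex ι ∪ mid, Set.union_subset ?_ ?_,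
    isOpen_cornerSimplex.measurableSet.union hmeas, ?_, ?_⟩
  · exact (Set.subset_insert _ _).trans (subset_convexHull ℝ _)
  · rintro t ⟨hb, -⟩
    have h := (convex_convexHull ℝ (insert a (cornerSimplex ι)))
      (subset_convexHull ℝ _ (Set.mem_insert_of_mem a hb))
      (subset_convexHull ℝ _ (Set.mem_insert a _)) (a := 1 / 2) (b := 1 / 2)
      (by norm_num) (by norm_num) (by norm_num)
    convert h using 1
    ext i; simp
  · rintro t (ht | ⟨hb, -⟩) m
    · exact ht.1 m
    · have hbm := hb.1 m
      simp only [Pi.add_apply, Pi.smul_apply, Pi.neg_apply, smul_eq_mul] at hbm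
      linarith [ha m]
  · rw [measure_union hdisj hmeas, volume_preimage_two_smul_sub,
      ENNReal.ofReal_add zero_le_one (by positivity), ENNReal.ofReal_one, add_mul, one_mul,
      ENNReal.ofReal_mul (by positivity), mul_assoc]
    gcongr
    exact ofReal_mul_volume_le_volume_sdiff_smul hk0 hk1

lemma sum_abs_det_mul_volume_le {κ : Type*} [Fintype κ] [DecidableEq ι] {Q : Set (ι → ℝ)}
    {N : κ → Matrix ι ι ℝ} {W : κ → Set (ι → ℝ)} (hW : ∀ f, MeasurableSet (W f))
    (hinj : ∀ f, Function.Injective (N f).mulVecLin)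
    (hdisj : Pairwise (Function.onFun Disjoint fun f => (N f).mulVecLin '' W f))
    (hsub : ∀ f, (N f).mulVecLin '' W f ⊆ Q) :
    ∑ f, ENNReal.ofReal |(N f).det| * volume (W f) ≤ volume Q := by
  have hmeas (f : κ) : MeasurableSet ((N f).mulVecLin '' W f) :=
    (hW f).image_of_continuousOn_injOn
      (LinearMap.continuous_of_finiteDimensional _).continuousOn (hinj f).injOn
  calc ∑ f, ENNReal.ofReal |(N f).det| * volume (W f)
      = ∑ f, volume ((N f).mulVecLin '' W f) := Finset.sum_congr rfl fun f _ => by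
        rw [Measure.addHaar_image_linearMap, ← Matrix.toLin'_apply', LinearMap.det_toLin']
    _ = volume (⋃ f, (N f).mulVecLin '' W f) := by
        rw [measure_iUnion hdisj hmeas, tsum_fintype]
    _ ≤ volume Q := measure_mono (Set.iUnion_subset hsub)

end Region

lemma exists_region_of_hasOvershoot {ι E : Type*} [Fintype ι] [Nonempty ι] [AddCommGroup E]
    [Module ℝ E] {Q : Set E} {p : ι → E} {κ : ℝ} (hQ : Convex ℝ Q) (h0 : 0 ∈ Q)
    (hp : ∀ m, p m ∈ Q) (hκ0 : 0 ≤ κ) (hκ1 : κ ≤ 1) (hover : HasOvershoot Q p κ) :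
    ∃ W : Set (ι → ℝ), MeasurableSet W ∧ (∀ t ∈ W, ∀ m, 0 < t m) ∧
      (∀ t ∈ W, ∑ m, t m • p m ∈ Q) ∧
      ENNReal.ofReal (1 + (1 / 2) ^ Fintype.card ι * (κ / 2)) * volume (cornerSimplex ι) ≤
        volume W := by
  obtain ⟨a, ha, hsum, hmem⟩ := exists_nonneg_of_hasOvershoot hQ hp hover
  obtain ⟨W, hsub, hmeas, hpos, hvol⟩ :=
    exists_region_of_le_sum (by linarith) (by linarith) ha hsum
  have hconv : Convex ℝ {t : ι → ℝ | ∑ m, t m • p m ∈ Q} :=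
    hQ.is_linear_preimage (Fintype.linearCombination ℝ p).isLinear
  refine ⟨W, hmeas, hpos, fun t ht => convexHull_min ?_ hconv (hsub ht), hvol⟩
  rintro b (rfl | hb)
  · exact hmem
  · exact sum_smul_mem_of_sum_le_one hQ h0 hp (fun m => (hb.1 m).le) hb.2.le

section FlagVolume

variable {n : ℕ} {Y : (Fin n → ℝ) → (Fin n → ℝ)} {η : ℝ} {w : Fin n → ℝ}

lemma card_signedFlag (n : ℕ) : Fintype.card (SignedFlag n) = n.factorial * 2 ^ n := by
  simp [Fintype.card_perm]

lemma sum_abs_det_flagMatrix_le_volume [NeZero n] {Q : Set (Fin n → ℝ)} {κ : SignedFlag n → ℝ}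
    (hQ : Convex ℝ Q) (h0 : 0 ∈ Q) (hw : ∀ m, 0 < w m) (hY : MovesFaceCentersBy Y η)
    (hη : 8 * n * η ≤ 1) (hmem : ∀ f m, w m • Y (faceCenter f m) ∈ Q) (hκ0 : ∀ f, 0 ≤ κ f)
    (hκ1 : ∀ f, κ f ≤ 1)
    (hover : ∀ f, HasOvershoot Q (fun m => w m • Y (faceCenter f m)) (κ f)) :
    ENNReal.ofReal ((∏ m, w m) * (∑ f, |(flagMatrix Y f).det| * (1 + (1 / 2) ^ n * (κ f / 2))) /
      n.factorial) ≤ volume Q := by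
  have hw_prod : 0 < ∏ m, w m := Finset.prod_pos fun m _ => hw m
  choose W hmeas hpos hWQ hvol using fun f =>
    exists_region_of_hasOvershoot hQ h0 (hmem f) (hκ0 f) (hκ1 f) (hover f)
  let N (f : SignedFlag n) := flagMatrix Y f * Matrix.diagonal w
  have hN (f t) : (N f).mulVecLin t = flagMatrix Y f *ᵥ (w * t) := by
    rw [Matrix.mulVecLin_apply, ← Matrix.mulVec_mulVec]
    exact congrArg _ (funext (Matrix.mulVec_diagonal w t))
  have hinj (f) : Function.Injective (N f).mulVecLin := fun t r htr => by
    rw [hN, hN] at htr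
    have hwt := flagMatrix_mulVec_injective hY (by linarith) f htr
    exact funext fun m => mul_left_cancel₀ (hw m).ne' (congrFun hwt m)
  have hdisj : Pairwise (Function.onFun Disjoint fun f => (N f).mulVecLin '' W f) := by
    intro f g hfg
    refine Set.disjoint_left.2 ?_
    rintro _ ⟨t, ht, rfl⟩ ⟨r, hr, hrt⟩
    rw [hN, hN] at hrt
    exact hfg (eq_of_flagMatrix_mulVec_eq hY hη (fun m => mul_pos (hw m) (hpos f t ht m))
      (fun m => mul_pos (hw m) (hpos g r hr m)) hrt.symm)
  have hsub (f) : (N f).mulVecLin '' W f ⊆ Q := by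
    rintro _ ⟨t, ht, rfl⟩
    rw [hN, flagMatrix_mulVec]
    simpa only [smul_smul, Pi.mul_apply, mul_comm (w _)] using hWQ f t ht
  refine le_trans ?_ (sum_abs_det_mul_volume_le hmeas hinj hdisj hsub)
  rw [mul_div_assoc, Finset.sum_div, Finset.mul_sum, ENNReal.ofReal_sum_of_nonneg fun f _ => by
    have := hκ0 f; positivity]
  refine Finset.sum_le_sum fun f _ => ?_
  have hdet : |(N f).det| = (∏ m, w m) * |(flagMatrix Y f).det| := by
    rw [Matrix.det_mul, Matrix.det_diagonal, abs_mul, abs_of_pos hw_prod, mul_comm]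
  rw [hdet, mul_div_assoc, ← mul_assoc, ENNReal.ofReal_mul (by positivity)]
  gcongr
  refine le_of_eq_of_le ?_ (hvol f)
  rw [volume_cornerSimplex, Fintype.card_fin, div_eq_mul_inv, ENNReal.ofReal_mul
    (by have := hκ0 f; positivity), ENNReal.ofReal_inv_of_pos (by positivity),
    ENNReal.ofReal_natCast]

/-- The factor of `η ^ 2` in the first-order expansion of the volume spanned by face centers that
are moved by at most `η`. -/
def errorConst (n : ℕ) : ℝ := 4 * (4 ^ n + n.factorial * 2 ^ n)

/-- The first-order change of the volume of the cube, relative to its volume, when the face centers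
are moved by `Y`. -/
def meanDisplacement (Y : (Fin n → ℝ) → (Fin n → ℝ)) : ℝ :=
  (∑ f : SignedFlag n, ∑ m : Fin n,
    (1 / ((m : ℝ) + 1)) * (faceCenter f m ⬝ᵥ (Y (faceCenter f m) - faceCenter f m))) /
    Fintype.card (SignedFlag n)

lemma errorConst_pos (n : ℕ) : 0 < errorConst n := by unfold errorConst; positivity

lemma sixteen_mul_le_errorConst (n : ℕ) : 16 * n ≤ errorConst n := by
  have hpow : (4 * n : ℝ) ≤ 4 ^ n := by
    rcases n with _ | n
    · simp
    · rw [pow_succ']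
      exact_mod_cast Nat.mul_le_mul_left 4 (Nat.lt_pow_self (by norm_num : 1 < 4))
  have hfact : (0 : ℝ) ≤ n.factorial * 2 ^ n := by positivity
  rw [errorConst]
  linarith

lemma mul_le_one_of_errorConst_mul_le_one (hη0 : 0 ≤ η) (hη : errorConst n * η ≤ 1) :
    16 * n * η ≤ 1 :=
  (mul_le_mul_of_nonneg_right (sixteen_mul_le_errorConst n) hη0).trans hη

lemma nonneg_of_movesFaceCentersBy [NeZero n] (hY : MovesFaceCentersBy Y η) : 0 ≤ η :=
  (abs_nonneg _).trans (hY 1 0 0)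

lemma abs_flagIncrementMatrix_sub_id_le (hY0 : Y 0 = 0) (hY : MovesFaceCentersBy Y η)
    (f : SignedFlag n) (l m : Fin n) : |flagIncrementMatrix (Y - id) f l m| ≤ 2 * η := by
  have hface := hY f m (f.1 l)
  have hprev : |Y (prevFaceCenter f m) (f.1 l) - prevFaceCenter f m (f.1 l)| ≤ η := by
    rcases prevFaceCenter_eq_zero_or f m with h | ⟨k, h⟩
    · simpa [h, hY0] using (abs_nonneg _).trans hface
    · rw [h]; exact hY f k _
  rw [flagIncrementMatrix, Matrix.of_apply, abs_sgn_mul]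
  exact (abs_sub _ _).trans (by simpa [two_mul] using add_le_add hface hprev)

lemma one_add_trace_sub_le_abs_det_flagMatrix (hY0 : Y 0 = 0) (hY : MovesFaceCentersBy Y η)
    (hη : 2 * η ≤ 1) (f : SignedFlag n) :
    1 + (flagIncrementMatrix (Y - id) f).trace - errorConst n * η ^ 2 ≤
      |(flagMatrix Y f).det| := by
  have hdet := abs_det_one_add_sub_one_sub_trace_le hη (abs_flagIncrementMatrix_sub_id_le hY0 hY f)
  rw [one_add_flagIncrementMatrix_sub_id, Fintype.card_fin] at hdet
  rw [abs_det_flagMatrix hY0]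
  refine le_trans ?_ (le_abs_self _)
  rw [errorConst]
  linarith [(abs_le.1 hdet).1]

lemma half_le_abs_det_flagMatrix [NeZero n] (hY0 : Y 0 = 0) (hY : MovesFaceCentersBy Y η)
    (hη : errorConst n * η ≤ 1) (f : SignedFlag n) : 1 / 2 ≤ |(flagMatrix Y f).det| := by
  have hη0 := nonneg_of_movesFaceCentersBy hY
  have hsmall := mul_le_one_of_errorConst_mul_le_one hη0 hη
  have hn : (1 : ℝ) ≤ n := by exact_mod_cast NeZero.one_le
  have hη16 : 16 * η ≤ 1 := by nlinarith
  have htrace : -(n * (2 * η)) ≤ (flagIncrementMatrix (Y - id) f).trace := by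
    have h := Finset.card_nsmul_le_sum Finset.univ (fun i => flagIncrementMatrix (Y - id) f i i)
      (-(2 * η)) fun i _ => (abs_le.1 (abs_flagIncrementMatrix_sub_id_le hY0 hY f i i)).1
    simpa [Matrix.trace] using h
  have hsq : errorConst n * η ^ 2 ≤ η := by nlinarith
  linarith [one_add_trace_sub_le_abs_det_flagMatrix hY0 hY (by linarith) f]

lemma sum_abs_det_flagMatrix_ge (hY0 : Y 0 = 0) (hY : MovesFaceCentersBy Y η) (hη : 2 * η ≤ 1) :
    Fintype.card (SignedFlag n) * (1 + meanDisplacement Y - errorConst n * η ^ 2) ≤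
      ∑ f : SignedFlag n, |(flagMatrix Y f).det| := by
  have hcard : (Fintype.card (SignedFlag n) : ℝ) ≠ 0 := by simp [Fintype.card_ne_zero]
  refine le_of_eq_of_le ?_ (Finset.sum_le_sum fun f _ =>
    one_add_trace_sub_le_abs_det_flagMatrix hY0 hY hη f)
  rw [Finset.sum_sub_distrib, Finset.sum_add_distrib, sum_trace_flagIncrementMatrix,
    meanDisplacement]
  simp only [Finset.sum_const, Finset.card_univ, nsmul_eq_mul, Pi.sub_apply, id]
  field_simp

/-- The relative volume gained per unit of overshoot at a single flag. -/
def gainConst (n : ℕ) : ℝ := (1 / 2) ^ n / (4 * Fintype.card (SignedFlag n))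

lemma gainConst_pos (n : ℕ) : 0 < gainConst n := by
  have : 0 < Fintype.card (SignedFlag n) := Fintype.card_pos
  unfold gainConst
  positivity

lemma le_volume_of_hasOvershoot [NeZero n] {Q : Set (Fin n → ℝ)} {κ : ℝ} (hQ : Convex ℝ Q)
    (h0 : 0 ∈ Q) (hw : ∀ m, 0 < w m) (hY0 : Y 0 = 0) (hY : MovesFaceCentersBy Y η)
    (hη : errorConst n * η ≤ 1) (hmem : ∀ f m, w m • Y (faceCenter f m) ∈ Q) (hκ0 : 0 ≤ κ)
    (hκ1 : κ ≤ 1) (f₀ : SignedFlag n)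
    (hover : HasOvershoot Q (fun m => w m • Y (faceCenter f₀ m)) κ) :
    ENNReal.ofReal ((∏ m, w m) * 2 ^ n *
      (1 + meanDisplacement Y - errorConst n * η ^ 2 + gainConst n * κ)) ≤ volume Q := by
  have hη0 := nonneg_of_movesFaceCentersBy hY
  have hsmall := mul_le_one_of_errorConst_mul_le_one hη0 hη
  have hn : (1 : ℝ) ≤ n := by exact_mod_cast NeZero.one_le
  have hw_prod : 0 ≤ ∏ m, w m := Finset.prod_nonneg fun m _ => (hw m).le
  have hcard : (Fintype.card (SignedFlag n) : ℝ) = n.factorial * 2 ^ n := by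
    exact_mod_cast card_signedFlag n
  let κs : SignedFlag n → ℝ := Pi.single f₀ κ
  have hvol := sum_abs_det_flagMatrix_le_volume hQ h0 hw hY (by nlinarith) hmem
    (κ := κs) (fun f => by rcases eq_or_ne f f₀ with rfl | h <;> simp [κs, *])
    (fun f => by rcases eq_or_ne f f₀ with rfl | h <;> simp [κs, *])
    (fun f => by
      rcases eq_or_ne f f₀ with rfl | h
      · simpa [κs] using hover
      · simpa [κs, h] using hasOvershoot_zero (hmem f))
  refine le_trans (ENNReal.ofReal_le_ofReal ?_) hvol
  have hsum : ∑ f, |(flagMatrix Y f).det| * (1 + (1 / 2) ^ n * (κs f / 2)) =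
      ∑ f, |(flagMatrix Y f).det| + |(flagMatrix Y f₀).det| * ((1 / 2) ^ n * (κ / 2)) := by
    simp only [mul_add, mul_one, Finset.sum_add_distrib]
    rw [_root_.add_right_inj, Finset.sum_eq_single f₀ (fun f _ hf => by simp [κs, hf]) (by simp)]
    simp [κs]
  rw [hsum, mul_assoc, mul_div_assoc]
  refine mul_le_mul_of_nonneg_left ?_ hw_prod
  rw [le_div_iff₀ (by positivity)]
  have hgain : 1 / 2 * ((1 / 2) ^ n * (κ / 2)) ≤
      |(flagMatrix Y f₀).det| * ((1 / 2) ^ n * (κ / 2)) := by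
    gcongr
    exact half_le_abs_det_flagMatrix hY0 hY hη f₀
  refine le_trans (le_of_eq ?_)
    (add_le_add (sum_abs_det_flagMatrix_ge hY0 hY (by nlinarith)) hgain)
  rw [gainConst, hcard]
  field_simp
  ring

end FlagVolume

/-! ### Contact pairs -/

section SignVector

variable {ι : Type*} {K : Set (ι → ℝ)} {δ : ℝ} {t x : ι → ℝ}

/-- A nonzero vector with entries in `{0, 1, -1}` is the center of a face of the cube. -/
def IsSignVector (t : ι → ℝ) : Prop := ∀ i, t i = 0 ∨ t i = 1 ∨ t i = -1

lemma IsSignVector.mul_self (ht : IsSignVector t) {i : ι} (hi : t i ≠ 0) : t i * t i = 1 := by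
  rcases ht i with h | h | h
  · exact absurd h hi
  · simp [h]
  · simp [h]

lemma IsSignVector.abs_sub_eq (ht : IsSignVector t) {i : ι} (hi : t i ≠ 0) :
    |x i - t i| = |t i * x i - 1| := by
  rcases ht i with h | h | h
  · exact absurd h hi
  · simp [h]
  · rw [h, ← abs_neg]; ring_nf

lemma IsSignVector.abs_le_one (ht : IsSignVector t) (i : ι) : |t i| ≤ 1 := by
  rcases ht i with h | h | h <;> simp [h]

lemma IsSignVector.abs_mul_le (ht : IsSignVector t) (i : ι) (a : ℝ) : |t i * a| ≤ |a| := by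
  rw [abs_mul]
  exact mul_le_of_le_one_left (abs_nonneg a) (ht.abs_le_one i)

lemma sum_nonpos_of_prod_one_add_mul_le_one {S : Finset ι} {r : ι → ℝ}
    (h : ∀ᶠ s in nhdsWithin (0 : ℝ) (Set.Ioi 0), ∏ i ∈ S, (1 + s * r i) ≤ 1) :
    ∑ i ∈ S, r i ≤ 0 := by
  have hderiv : HasDerivAt (fun s : ℝ => ∏ i ∈ S, (1 + s * r i)) (∑ i ∈ S, r i) 0 := by
    classical
    have hprod := HasDerivAt.fun_finsetProd (u := S) (f := fun i s => 1 + s * r i) (x := (0 : ℝ))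
      fun i _ => ((hasDerivAt_id (0 : ℝ)).mul_const (r i)).const_add 1
    simpa using hprod
  have hslope := (hasDerivWithinAt_iff_tendsto_slope' Set.self_notMem_Ioi).1
    (hderiv.hasDerivWithinAt (s := Set.Ioi 0))
  refine le_of_tendsto hslope ?_
  filter_upwards [h, self_mem_nhdsWithin] with s hs hpos
  rw [slope_def_field]
  refine div_nonpos_of_nonpos_of_nonneg ?_ (by simpa using le_of_lt hpos)
  simpa using hs

/-- `K` is a convex body between the cube shrunk by the factor `1 - δ` and the cube,
where `0 < δ ≤ 1 / 2`. -/
structure IsNearCube (K : Set (ι → ℝ)) (δ : ℝ) : Prop where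
  convex : Convex ℝ K
  isCompact : IsCompact K
  abs_le_one : ∀ z ∈ K, ∀ i, |z i| ≤ 1
  mem_of_abs_le : ∀ z : ι → ℝ, (∀ i, |z i| ≤ 1 - δ) → z ∈ K
  pos : 0 < δ
  le_half : δ ≤ 1 / 2

lemma IsNearCube.mem_nhds_zero [Finite ι] (hK : IsNearCube K δ) : K ∈ nhds 0 := by
  cases nonempty_fintype ι
  refine Filter.mem_of_superset (Metric.ball_mem_nhds 0 (by norm_num : (0 : ℝ) < 1 / 2)) ?_
  intro z hz
  rw [mem_ball_zero_iff] at hz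
  exact hK.mem_of_abs_le z fun i => by
    linarith [norm_le_pi_norm z i, Real.norm_eq_abs (z i), hK.le_half]

/-- The cone over the face of the cube with center `t`, within the coordinates in its support. -/
def faceCone (t : ι → ℝ) : Set (ι → ℝ) := {z | (∀ i, t i = 0 → z i = 0) ∧ ∀ i, 0 ≤ t i * z i}

lemma isClosed_faceCone (t : ι → ℝ) : IsClosed (faceCone t) := by
  simp only [faceCone, Set.ofPred_and, Set.ofPred_forall]
  refine (isClosed_iInter fun i => isClosed_iInter fun _ => ?_).inter (isClosed_iInter fun i => ?_)
  · exact isClosed_eq (continuous_apply i) continuous_const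
  · exact isClosed_le continuous_const (by fun_prop)

lemma eventually_mem_faceCone [Finite ι] (hx : x ∈ faceCone t)
    (hpos : ∀ i, t i ≠ 0 → 0 < t i * x i) {z : ι → ℝ} (hz : ∀ i, t i = 0 → z i = 0) :
    ∀ᶠ s in nhds (0 : ℝ), (1 - s) • x + s • z ∈ faceCone t := by
  have hcoord (i : ι) : ∀ᶠ s in nhds (0 : ℝ), 0 ≤ t i * ((1 - s) * x i + s * z i) := by
    by_cases hi : t i = 0
    · simp [hi]
    · have hcont : Continuous fun s : ℝ => t i * ((1 - s) * x i + s * z i) := by fun_prop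
      filter_upwards [hcont.continuousAt.eventually_const_lt (u := 0) (by simpa using hpos i hi)]
        with s hs using hs.le
  filter_upwards [Filter.eventually_all.2 hcoord] with s hs
  exact ⟨fun i hi => by simp [hx.1 i hi, hz i hi], hs⟩

lemma IsNearCube.smul_mem (hK : IsNearCube K δ) (ht : IsSignVector t) :
    (1 - δ) • t ∈ K ∩ faceCone t := by
  have hδ : 0 ≤ 1 - δ := by linarith [hK.le_half]
  refine ⟨hK.mem_of_abs_le _ fun i => ?_, fun i hi => by simp [hi], fun i => ?_⟩
  · rw [Pi.smul_apply, smul_eq_mul, abs_mul, abs_of_nonneg hδ]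
    exact mul_le_of_le_one_right hδ (ht.abs_le_one i)
  · rw [Pi.smul_apply, smul_eq_mul, mul_left_comm]
    exact mul_nonneg hδ (mul_self_nonneg _)

lemma IsNearCube.mul_le_one (hK : IsNearCube K δ) (ht : IsSignVector t) (hx : x ∈ K) (i : ι) :
    t i * x i ≤ 1 :=
  (le_abs_self _).trans ((ht.abs_mul_le i _).trans (hK.abs_le_one x hx i))

end SignVector

lemma exists_extension_le_one {E : Type*} [AddCommGroup E] [Module ℝ E] {C : Set E}
    (hC : Convex ℝ C) (habs : Absorbent ℝ C) (V : Submodule ℝ E) (L : E →ₗ[ℝ] ℝ)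
    (hL : ∀ z ∈ C, z ∈ V → L z ≤ 1) :
    ∃ g : E →ₗ[ℝ] ℝ, (∀ v ∈ V, g v = L v) ∧ ∀ z ∈ C, g z ≤ 1 := by
  have hgauge (v : V) : L v ≤ gauge C v := by
    refine le_of_forall_gt_imp_ge_of_dense fun a ha => ?_
    obtain ⟨b, hb, hba, z, hz, hzv⟩ := exists_lt_of_gauge_lt habs ha
    simp only at hzv
    have hzV : z ∈ V := (V.smul_mem_iff hb.ne').1 (hzv ▸ v.2)
    rw [← hzv, map_smul, smul_eq_mul]
    nlinarith [hL z hz hzV]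
  obtain ⟨g, hgL, hg⟩ := exists_extension_of_le_sublinear ⟨V, L.domRestrict V⟩ (gauge C)
    (fun c hc v => by rw [gauge_smul_of_nonneg hc.le, smul_eq_mul]) (gauge_add_le hC habs) hgauge
  exact ⟨g, fun v hv => hgL ⟨v, hv⟩, fun z hz => (hg z).trans (gauge_le_one_of_mem hz)⟩

section NearCube

variable {ι : Type*} [Fintype ι]

/-- The polar body of a set of coordinate vectors, with respect to the dot product. -/
def dotPolar (K : Set (ι → ℝ)) : Set (ι → ℝ) := {ξ | ∀ z ∈ K, z ⬝ᵥ ξ ≤ 1}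

lemma convex_dotPolar (K : Set (ι → ℝ)) : Convex ℝ (dotPolar K) := by
  intro ξ hξ υ hυ a b ha hb hab z hz
  rw [dotProduct_add, dotProduct_smul, dotProduct_smul, smul_eq_mul, smul_eq_mul, ← hab]
  nlinarith [hξ z hz, hυ z hz]

lemma zero_mem_dotPolar (K : Set (ι → ℝ)) : 0 ∈ dotPolar K := fun z _ => by simp

variable {K : Set (ι → ℝ)} {δ : ℝ} {t x y : ι → ℝ}

/-- The coordinates that are fixed on the face of the cube with center `t`. -/
def signSupport (t : ι → ℝ) : Finset ι := Finset.univ.filter fun i => t i ≠ 0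

lemma mem_signSupport {i : ι} : i ∈ signSupport t ↔ t i ≠ 0 := by simp [signSupport]

lemma exists_mem_dotPolar_eqOn (hK : Convex ℝ K) (habs : Absorbent ℝ K) (S : Finset ι) (ξ : ι → ℝ)
    (hξ : ∀ z ∈ K, (∀ i ∉ S, z i = 0) → ∑ i ∈ S, z i * ξ i ≤ 1) :
    ∃ y ∈ dotPolar K, ∀ i ∈ S, y i = ξ i := by
  classical
  let V : Submodule ℝ (ι → ℝ) := Submodule.pi (S : Set ι)ᶜ fun _ => ⊥
  have hV (z : ι → ℝ) : z ∈ V ↔ ∀ i ∉ S, z i = 0 := by simp [V, Submodule.mem_pi]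
  obtain ⟨g, hgV, hg⟩ := exists_extension_le_one hK habs V (dotProductEquiv ℝ ι ξ)
      fun z hz hzV => by
    rw [hV] at hzV
    rw [dotProductEquiv_apply_apply, dotProduct_comm, dotProduct,
      ← Finset.sum_subset S.subset_univ fun i _ hi => by simp [hzV i hi]]
    exact hξ z hz hzV
  refine ⟨(dotProductEquiv ℝ ι).symm g, fun z hz => ?_, fun i hi => ?_⟩
  · rw [dotProduct_comm, ← dotProductEquiv_apply_apply, LinearEquiv.apply_symm_apply]
    exact hg z hz
  · have hsingle : Pi.single i 1 ∈ V := (hV _).2 fun j hj => by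
      rw [Pi.single_eq_of_ne]; rintro rfl; exact hj hi
    simpa using hgV _ hsingle

/-- The product of the coordinates of `z` in the support of `t`, with the signs of `t`. -/
def signedProd (t z : ι → ℝ) : ℝ := ∏ i ∈ signSupport t, t i * z i

lemma pow_card_le_of_isMaxOn_signedProd (hK : IsNearCube K δ) (ht : IsSignVector t)
    (hx : x ∈ K ∩ faceCone t) (hmax : IsMaxOn (signedProd t) (K ∩ faceCone t) x) {i : ι}
    (hi : t i ≠ 0) : (1 - δ) ^ (signSupport t).card ≤ t i * x i := by
  classical
  calc (1 - δ) ^ (signSupport t).card = signedProd t ((1 - δ) • t) := by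
        rw [signedProd, ← Finset.prod_const]
        refine Finset.prod_congr rfl fun j hj => ?_
        rw [Pi.smul_apply, smul_eq_mul, mul_left_comm, ht.mul_self (mem_signSupport.1 hj), mul_one]
    _ ≤ signedProd t x := hmax (hK.smul_mem ht)
    _ = t i * x i * ∏ j ∈ (signSupport t).erase i, t j * x j :=
        (Finset.mul_prod_erase _ _ (mem_signSupport.2 hi)).symm
    _ ≤ t i * x i := mul_le_of_le_one_right (hx.2.2 i)
        (Finset.prod_le_one (fun j _ => hx.2.2 j) fun j _ => hK.mul_le_one ht hx.1 j)

lemma signedProd_eq_mul_prod_one_add (hpos : ∀ i, t i ≠ 0 → 0 < t i * x i) (z : ι → ℝ) (s : ℝ) :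
    signedProd t ((1 - s) • x + s • z) =
      signedProd t x * ∏ i ∈ signSupport t, (1 + s * (z i / x i - 1)) := by
  rw [signedProd, signedProd, ← Finset.prod_mul_distrib]
  refine Finset.prod_congr rfl fun i hi => ?_
  have hxi : x i ≠ 0 := right_ne_zero_of_mul (hpos i (mem_signSupport.1 hi)).ne'
  simp only [Pi.add_apply, Pi.smul_apply, smul_eq_mul]
  field_simp
  ring

lemma sum_div_le_card_of_isMaxOn_signedProd (hK : Convex ℝ K) (hx : x ∈ K ∩ faceCone t)
    (hmax : IsMaxOn (signedProd t) (K ∩ faceCone t) x) (hpos : ∀ i, t i ≠ 0 → 0 < t i * x i)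
    {z : ι → ℝ} (hz : z ∈ K) (hz0 : ∀ i, t i = 0 → z i = 0) :
    ∑ i ∈ signSupport t, z i / x i ≤ (signSupport t).card := by
  suffices h : ∑ i ∈ signSupport t, (z i / x i - 1) ≤ 0 by
    simpa [Finset.sum_sub_distrib] using h
  refine sum_nonpos_of_prod_one_add_mul_le_one ?_
  have hx_prod : 0 < signedProd t x := Finset.prod_pos fun i hi => hpos i (mem_signSupport.1 hi)
  filter_upwards [nhdsWithin_le_nhds (eventually_mem_faceCone hx.2 hpos hz0),
    self_mem_nhdsWithin, nhdsWithin_le_nhds (eventually_lt_nhds zero_lt_one)] with s hcone hs hs1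
  have hle := hmax ⟨hK hx.1 hz (by linarith) (le_of_lt hs) (by ring), hcone⟩
  rw [Set.mem_ofPred_eq, signedProd_eq_mul_prod_one_add hpos] at hle
  exact le_of_mul_le_mul_left (by linarith) hx_prod

/-- A point `x` of `K` and a multiple `y` of a point of the polar body that belong to the face with
center `t`: in the support of `t`, the coordinates of `y` are the inverses of those of `x`. -/
structure IsContactPair (K : Set (ι → ℝ)) (δ : ℝ) (t x y : ι → ℝ) : Prop where
  mem : x ∈ K
  smul_mem_dotPolar : (1 / ((signSupport t).card : ℝ)) • y ∈ dotPolar K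
  eq_zero : ∀ i, t i = 0 → x i = 0
  le_mul : ∀ i, t i ≠ 0 → 1 - Fintype.card ι * δ ≤ t i * x i
  mul_le_one : ∀ i, t i * x i ≤ 1
  mul_eq_one : ∀ i, t i ≠ 0 → y i * x i = 1
  eq_of_card_eq_one : (signSupport t).card = 1 → x = t ∧ y = t

lemma IsNearCube.exists_isMaxOn_signedProd (hK : IsNearCube K δ) (ht : IsSignVector t) :
    ∃ x ∈ K ∩ faceCone t, IsMaxOn (signedProd t) (K ∩ faceCone t) x :=
  (hK.isCompact.inter_right (isClosed_faceCone t)).exists_isMaxOn ⟨_, hK.smul_mem ht⟩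
    (by unfold signedProd; fun_prop)

lemma IsNearCube.one_sub_card_mul_le_pow (hK : IsNearCube K δ) (S : Finset ι) :
    1 - Fintype.card ι * δ ≤ (1 - δ) ^ S.card := by
  have hbernoulli := one_add_mul_le_pow (a := -δ) (by linarith [hK.le_half]) S.card
  have hcard : (S.card : ℝ) * δ ≤ Fintype.card ι * δ := by
    gcongr
    · exact hK.pos.le
    · exact S.card_le_univ
  rw [← sub_eq_add_neg] at hbernoulli
  linarith

lemma IsNearCube.exists_isContactPair_of_card_ne_one (hK : IsNearCube K δ) (ht : IsSignVector t)
    (hS : (signSupport t).Nonempty) (hcard : (signSupport t).card ≠ 1) :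
    ∃ x y, IsContactPair K δ t x y := by
  obtain ⟨x, hx, hmax⟩ := hK.exists_isMaxOn_signedProd ht
  have hpow (i) (hi : t i ≠ 0) := pow_card_le_of_isMaxOn_signedProd hK ht hx hmax hi
  have hδ : 0 < 1 - δ := by linarith [hK.le_half]
  have hpos (i) (hi : t i ≠ 0) : 0 < t i * x i := (pow_pos hδ _).trans_le (hpow i hi)
  have hx0 (i) (hi : t i ≠ 0) : x i ≠ 0 := right_ne_zero_of_mul (hpos i hi).ne'
  have hS0 : (0 : ℝ) < (signSupport t).card := by exact_mod_cast hS.card_pos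
  obtain ⟨y, hy, hyx⟩ := exists_mem_dotPolar_eqOn hK.convex (absorbent_nhds_zero hK.mem_nhds_zero)
    (signSupport t) (fun i => 1 / ((signSupport t).card * x i)) fun z hz hz0 => by
      have hsum := sum_div_le_card_of_isMaxOn_signedProd hK.convex hx hmax hpos hz
        fun i hi => hz0 i (by simpa [mem_signSupport] using hi)
      rw [← div_le_one hS0, Finset.sum_div] at hsum
      refine le_of_eq_of_le (Finset.sum_congr rfl fun i _ => ?_) hsum
      ring
  refine ⟨x, (signSupport t).card • y, hx.1, ?_, hx.2.1, fun i hi => ?_, hK.mul_le_one ht hx.1,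
    fun i hi => ?_, fun h => absurd h hcard⟩
  · rwa [← Nat.cast_smul_eq_nsmul ℝ, smul_smul, one_div, inv_mul_cancel₀ hS0.ne', one_smul]
  · exact (hK.one_sub_card_mul_le_pow _).trans (hpow i hi)
  · have := hx0 i hi
    rw [Pi.smul_apply, nsmul_eq_mul, hyx i (mem_signSupport.2 hi)]
    field_simp

lemma IsNearCube.isContactPair_self (hK : IsNearCube K δ) (ht : IsSignVector t) (htK : t ∈ K)
    (hcard : (signSupport t).card = 1) : IsContactPair K δ t t t := by
  refine ⟨htK, ?_, fun _ => id, fun i hi => ?_, hK.mul_le_one ht htK, fun i => ht.mul_self,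
    fun _ => ⟨rfl, rfl⟩⟩
  · rw [hcard, Nat.cast_one, div_one, one_smul]
    intro z hz
    obtain ⟨j, hj⟩ := Finset.card_eq_one.1 hcard
    have ht0 (i) (hi : i ≠ j) : t i = 0 := by
      by_contra h
      exact hi (by simpa [hj] using mem_signSupport.2 h)
    rw [dotProduct, Finset.sum_eq_single j (fun i _ hi => by simp [ht0 i hi]) (by simp), mul_comm]
    exact hK.mul_le_one ht hz j
  · rw [ht.mul_self hi]
    have := hK.pos
    linarith [show 0 ≤ Fintype.card ι * δ by positivity]

lemma IsNearCube.exists_isContactPair (hK : IsNearCube K δ)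
    (hunit : ∀ t, IsSignVector t → (signSupport t).card = 1 → t ∈ K) (ht : IsSignVector t)
    (hS : (signSupport t).Nonempty) : ∃ x y, IsContactPair K δ t x y := by
  by_cases hcard : (signSupport t).card = 1
  · exact ⟨t, t, hK.isContactPair_self ht (hunit t ht hcard) hcard⟩
  · exact hK.exists_isContactPair_of_card_ne_one ht hS hcard

end NearCube

section ContactPairEstimates

variable {ι : Type*} [Fintype ι] {K : Set (ι → ℝ)} {δ : ℝ} {t x y : ι → ℝ}

lemma IsNearCube.sum_abs_le (hK : IsNearCube K δ) (hy : y ∈ dotPolar K) :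
    ∑ i, |y i| ≤ 1 + 2 * δ := by
  have hδ := hK.pos
  have hδ2 := hK.le_half
  choose ε hε using fun i => exists_sgn_mul_eq_abs (y i)
  have hdot := hy (fun i => (1 - δ) * sgn (ε i)) (hK.mem_of_abs_le _ fun i => by
    rw [abs_mul, abs_sgn, mul_one, abs_of_nonneg (by linarith)])
  simp only [dotProduct, mul_assoc, hε, ← Finset.mul_sum] at hdot
  by_contra! hlt
  nlinarith

namespace IsContactPair

lemma sum_abs_le (h : IsContactPair K δ t x y) (hK : IsNearCube K δ)
    (hS : (signSupport t).Nonempty) : ∑ i, |y i| ≤ (signSupport t).card * (1 + 2 * δ) := by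
  have hcard : (0 : ℝ) < (signSupport t).card := by exact_mod_cast hS.card_pos
  have hle := hK.sum_abs_le h.smul_mem_dotPolar
  simp only [Pi.smul_apply, smul_eq_mul, abs_mul, ← Finset.mul_sum] at hle
  rwa [abs_of_pos (by positivity), one_div, inv_mul_le_iff₀ hcard] at hle

lemma mul_mul_mul_eq_one (h : IsContactPair K δ t x y) (ht : IsSignVector t) {i : ι}
    (hi : t i ≠ 0) : (t i * y i) * (t i * x i) = 1 := by
  linear_combination (y i * x i) * ht.mul_self hi + h.mul_eq_one i hi

lemma abs_sub_le_left (h : IsContactPair K δ t x y) (hδ : 0 ≤ δ) (ht : IsSignVector t) (i : ι) :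
    |x i - t i| ≤ Fintype.card ι * δ := by
  have hcard : (0 : ℝ) ≤ Fintype.card ι * δ := by positivity
  by_cases hi : t i = 0
  · simpa [h.eq_zero i hi, hi] using hcard
  · rw [ht.abs_sub_eq hi, abs_le]
    constructor <;> linarith [h.le_mul i hi, h.mul_le_one i]

lemma mul_pos (h : IsContactPair K δ t x y) (hcard : Fintype.card ι * δ ≤ 1 / 2) {i : ι}
    (hi : t i ≠ 0) : 0 < t i * x i := by
  linarith [h.le_mul i hi]

lemma mul_right_pos (h : IsContactPair K δ t x y) (hcard : Fintype.card ι * δ ≤ 1 / 2)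
    (ht : IsSignVector t) {i : ι} (hi : t i ≠ 0) : 0 < t i * y i :=
  pos_of_mul_pos_left (by rw [h.mul_mul_mul_eq_one ht hi]; exact one_pos) (h.mul_pos hcard hi).le

lemma one_le_mul_right (h : IsContactPair K δ t x y) (hcard : Fintype.card ι * δ ≤ 1 / 2)
    (ht : IsSignVector t) {i : ι} (hi : t i ≠ 0) : 1 ≤ t i * y i := by
  rw [← h.mul_mul_mul_eq_one ht hi]
  exact mul_le_of_le_one_right (h.mul_right_pos hcard ht hi).le (h.mul_le_one i)

lemma mul_right_le (h : IsContactPair K δ t x y) (hcard : Fintype.card ι * δ ≤ 1 / 2)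
    (hδ : 0 ≤ δ) (ht : IsSignVector t) {i : ι} (hi : t i ≠ 0) :
    t i * y i ≤ 1 + 2 * (Fintype.card ι * δ) := by
  have hnonneg : (0 : ℝ) ≤ Fintype.card ι * δ := by positivity
  refine le_of_mul_le_mul_right ?_ (h.mul_pos hcard hi)
  rw [h.mul_mul_mul_eq_one ht hi]
  nlinarith [h.le_mul i hi]

lemma abs_le_of_eq_zero (h : IsContactPair K δ t x y) (hcard : Fintype.card ι * δ ≤ 1 / 2)
    (hK : IsNearCube K δ) (ht : IsSignVector t) (hS : (signSupport t).Nonempty) {i : ι}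
    (hi : t i = 0) :
    |y i| ≤ 2 * (Fintype.card ι * δ) := by
  classical
  have hone (j) (hj : j ∈ signSupport t) : 1 ≤ |y j| :=
    (h.one_le_mul_right hcard ht (mem_signSupport.1 hj)).trans
      ((le_abs_self _).trans (ht.abs_mul_le j _))
  have hsupport : ((signSupport t).card : ℝ) ≤ ∑ j ∈ signSupport t, |y j| := by
    simpa using Finset.card_nsmul_le_sum (signSupport t) (fun j => |y j|) 1 hone
  have hsplit : |y i| + ∑ j ∈ signSupport t, |y j| ≤ ∑ j, |y j| := by
    rw [← Finset.sum_insert (f := fun j => |y j|) (by simp [mem_signSupport, hi])]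
    exact Finset.sum_le_univ_sum_of_nonneg fun _ => abs_nonneg _
  have hle : ((signSupport t).card : ℝ) * δ ≤ Fintype.card ι * δ := by
    gcongr
    · exact hK.pos.le
    · exact (signSupport t).card_le_univ
  linarith [h.sum_abs_le hK hS]

lemma abs_sub_le_right (h : IsContactPair K δ t x y) (hcard : Fintype.card ι * δ ≤ 1 / 2)
    (hK : IsNearCube K δ) (ht : IsSignVector t) (hS : (signSupport t).Nonempty) (i : ι) :
    |y i - t i| ≤ 2 * (Fintype.card ι * δ) := by
  by_cases hi : t i = 0
  · rw [hi, sub_zero]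
    exact h.abs_le_of_eq_zero hcard hK ht hS hi
  · have hone := h.one_le_mul_right hcard ht hi
    rw [ht.abs_sub_eq hi, abs_of_nonneg (by linarith)]
    linarith [h.mul_right_le hcard hK.pos.le ht hi]

-- In the support of `t` the signed coordinates `t i * x i` and `t i * y i` are positive with
-- product one, so their sum is at least two.
lemma dotProduct_sub_add_nonneg (h : IsContactPair K δ t x y)
    (hcard : Fintype.card ι * δ ≤ 1 / 2) (ht : IsSignVector t) :
    0 ≤ t ⬝ᵥ (x - t) + t ⬝ᵥ (y - t) := by
  rw [dotProduct, dotProduct, ← Finset.sum_add_distrib]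
  refine Finset.sum_nonneg fun i _ => ?_
  by_cases hi : t i = 0
  · simp [hi]
  · simp only [Pi.sub_apply]
    have hy := h.mul_right_pos hcard ht hi
    nlinarith [h.mul_mul_mul_eq_one ht hi, h.mul_pos hcard hi, ht.mul_self hi,
      sq_nonneg (t i * x i - t i * y i)]

end IsContactPair

end ContactPairEstimates

section ContactMaps

variable {n : ℕ}

lemma isSignVector_faceCenter (f : SignedFlag n) (m : Fin n) : IsSignVector (faceCenter f m) := by
  intro i
  simp only [faceCenter]
  split_ifs
  · exact Or.inr (sgn_eq_one_or _)
  · exact Or.inl rfl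

lemma card_signSupport_faceCenter (f : SignedFlag n) (m : Fin n) :
    (signSupport (faceCenter f m)).card = m + 1 := by
  have hmap : signSupport (faceCenter f m) = (Finset.Iic m).map f.1.toEmbedding := by
    ext i
    simp [mem_signSupport, faceCenter, sgn_ne_zero, Finset.mem_map_equiv]
  rw [hmap, Finset.card_map, Fin.card_Iic]

lemma signSupport_faceCenter_nonempty (f : SignedFlag n) (m : Fin n) :
    (signSupport (faceCenter f m)).Nonempty := by
  rw [← Finset.card_pos, card_signSupport_faceCenter]
  omega

variable {K : Set (Fin n → ℝ)} {δ η : ℝ} {X Y : (Fin n → ℝ) → (Fin n → ℝ)}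

/-- `X` and `Y` send every face center of the cube to a contact pair of `K`. -/
structure IsContactMaps (K : Set (Fin n → ℝ)) (δ : ℝ) (X Y : (Fin n → ℝ) → (Fin n → ℝ)) :
    Prop where
  map_zero_left : X 0 = 0
  map_zero_right : Y 0 = 0
  isContactPair : ∀ f m,
    IsContactPair K δ (faceCenter f m) (X (faceCenter f m)) (Y (faceCenter f m))

lemma IsNearCube.exists_isContactMaps (hK : IsNearCube K δ)
    (hunit : ∀ t, IsSignVector t → (signSupport t).card = 1 → t ∈ K) :
    ∃ X Y, IsContactMaps K δ X Y := by
  classical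
  choose! X Y h using fun t => hK.exists_isContactPair (t := t) hunit
  refine ⟨fun t => if t = 0 then 0 else X t, fun t => if t = 0 then 0 else Y t, by simp, by simp,
    fun f m => ?_⟩
  have hne : faceCenter f m ≠ 0 := fun h0 => by
    simpa [h0, signSupport] using signSupport_faceCenter_nonempty f m
  simpa only [hne, if_false] using
    h _ (isSignVector_faceCenter f m) (signSupport_faceCenter_nonempty f m)

namespace IsContactMaps

lemma smul_mem_dotPolar (h : IsContactMaps K δ X Y) (f : SignedFlag n) (m : Fin n) :
    (1 / ((m : ℝ) + 1)) • Y (faceCenter f m) ∈ dotPolar K := by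
  simpa [card_signSupport_faceCenter] using (h.isContactPair f m).smul_mem_dotPolar

lemma movesFaceCentersBy_left (h : IsContactMaps K δ X Y) (hδ : 0 ≤ δ) :
    MovesFaceCentersBy X (n * δ) := fun f m i => by
  simpa using (h.isContactPair f m).abs_sub_le_left hδ (isSignVector_faceCenter f m) i

lemma movesFaceCentersBy_right (h : IsContactMaps K δ X Y) (hK : IsNearCube K δ)
    (hnδ : n * δ ≤ 1 / 2) : MovesFaceCentersBy Y (2 * (n * δ)) := fun f m i => by
  simpa using (h.isContactPair f m).abs_sub_le_right (by simpa using hnδ) hK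
    (isSignVector_faceCenter f m) (signSupport_faceCenter_nonempty f m) i

lemma meanDisplacement_add_nonneg (h : IsContactMaps K δ X Y) (hnδ : n * δ ≤ 1 / 2) :
    0 ≤ meanDisplacement X + meanDisplacement Y := by
  rw [meanDisplacement, meanDisplacement, ← add_div, ← Finset.sum_add_distrib]
  refine div_nonneg (Finset.sum_nonneg fun f _ => ?_) (Nat.cast_nonneg _)
  rw [← Finset.sum_add_distrib]
  refine Finset.sum_nonneg fun m _ => ?_
  rw [← mul_add]
  exact mul_nonneg (by positivity) ((h.isContactPair f m).dotProduct_sub_add_nonneg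
    (by simpa using hnδ) (isSignVector_faceCenter f m))

end IsContactMaps

lemma MovesFaceCentersBy.abs_dotProduct_le (hY : MovesFaceCentersBy Y η) {v : Fin n → ℝ}
    (hv : ∀ i, |v i| ≤ 1) (f : SignedFlag n) (m : Fin n) :
    |v ⬝ᵥ (Y (faceCenter f m) - faceCenter f m)| ≤ n * η := by
  have hcoord (i : Fin n) : |v i * (Y (faceCenter f m) - faceCenter f m) i| ≤ η := by
    rw [abs_mul]
    exact (mul_le_of_le_one_left (abs_nonneg _) (hv i)).trans (hY f m i)
  refine (Finset.abs_sum_le_sum_abs _ _).trans ?_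
  simpa only [nsmul_eq_mul, Finset.card_univ, Fintype.card_fin] using
    Finset.sum_le_card_nsmul Finset.univ _ η fun i _ => hcoord i

lemma MovesFaceCentersBy.abs_meanDisplacement_le (hY : MovesFaceCentersBy Y η) :
    |meanDisplacement Y| ≤ n * n * η := by
  have hN : (0 : ℝ) < Fintype.card (SignedFlag n) := by exact_mod_cast Fintype.card_pos
  have hterm (f : SignedFlag n) (m : Fin n) : |1 / ((m : ℝ) + 1) *
      (faceCenter f m ⬝ᵥ (Y (faceCenter f m) - faceCenter f m))| ≤ n * η := by
    have hweight : 1 / ((m : ℝ) + 1) ≤ 1 := div_le_one_of_le₀ (by simp) (by positivity)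
    rw [abs_mul, abs_of_pos (by positivity)]
    exact (mul_le_of_le_one_left (abs_nonneg _) hweight).trans
      (hY.abs_dotProduct_le (abs_faceCenter_le_one f m) f m)
  have hflag (f : SignedFlag n) : |∑ m : Fin n, 1 / ((m : ℝ) + 1) *
      (faceCenter f m ⬝ᵥ (Y (faceCenter f m) - faceCenter f m))| ≤ n * (n * η) := by
    refine (Finset.abs_sum_le_sum_abs _ _).trans ?_
    simpa using Finset.sum_le_card_nsmul Finset.univ _ _ fun m _ => hterm f m
  rw [meanDisplacement, abs_div, abs_of_pos hN, div_le_iff₀' hN, mul_assoc]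
  refine (Finset.abs_sum_le_sum_abs _ _).trans ?_
  simpa only [nsmul_eq_mul, Finset.card_univ] using
    Finset.sum_le_card_nsmul Finset.univ _ _ fun f _ => hflag f

end ContactMaps

/-! ### Overshoot at a missing vertex -/

section Vertex

variable {ι : Type*} {K : Set (ι → ℝ)} {δ : ℝ}

/-- The vertex of the cube with the given signs. -/
def vertex (ε : ι → ℤˣ) : ι → ℝ := fun i => sgn (ε i)

lemma exists_smul_vertex_notMem [Finite ι] (hK : Convex ℝ K) {a : ℝ} (ha : 0 ≤ a) {z : ι → ℝ}
    (hz : ∀ i, |z i| ≤ a) (hzK : z ∉ K) : ∃ ε : ι → ℤˣ, a • vertex ε ∉ K := by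
  by_contra! hvertex
  have hhull : z ∈ convexHull ℝ (Set.pi Set.univ fun _ : ι => ({-a, a} : Set ℝ)) := by
    rw [convexHull_pi]
    intro i _
    rw [convexHull_pair, segment_eq_Icc (by linarith)]
    exact abs_le.1 (hz i)
  refine hzK (convexHull_min (fun q hq => ?_) hK hhull)
  have hsign (i : ι) : ∃ u : ℤˣ, q i = a * sgn u := by
    rcases hq i trivial with h | h
    · exact ⟨-1, by simp [h, sgn]⟩
    · exact ⟨1, by simpa [sgn] using h⟩
  choose ε hε using hsign
  rw [show q = a • vertex ε from funext hε]
  exact hvertex ε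

lemma IsNearCube.exists_div_le_one_sub [Fintype ι] (hK : IsNearCube K δ) {ε : ι → ℤˣ}
    (hε : (1 - δ / 2) • vertex ε ∉ K) {x : ι → ℝ} (hx : x ∈ K) :
    ∃ j, δ / (3 * Fintype.card ι) ≤ 1 - sgn (ε j) * x j := by
  by_contra! hclose
  have hδ := hK.pos
  have hδ2 := hK.le_half
  set a := δ / 3 with ha
  have ha0 : 0 < a := by positivity
  have hgap (i : ι) : 0 ≤ (1 - sgn (ε i) * x i) / a ∧ (1 - sgn (ε i) * x i) / a ≤ 1 := by
    have hcard : (1 : ℝ) ≤ Fintype.card ι := by exact_mod_cast Fintype.card_pos_iff.2 ⟨i⟩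
    have hle : δ / (3 * Fintype.card ι) ≤ a := by rw [ha]; gcongr; linarith
    have habs := hK.abs_le_one x hx i
    rw [← abs_sgn_mul (ε i)] at habs
    exact ⟨div_nonneg (by linarith [(abs_le.1 habs).2]) ha0.le,
      (div_le_one ha0).2 ((hclose i).le.trans hle)⟩
  -- The segment from `x` through the shrunk vertex ends at `q`.
  let q : ι → ℝ := fun i => sgn (ε i) * (-(1 / 2) + (1 - a) * ((1 - sgn (ε i) * x i) / a))
  have hq : q ∈ K := hK.mem_of_abs_le q fun i => by
    obtain ⟨h0, h1⟩ := hgap i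
    rw [abs_sgn_mul, abs_le]
    constructor <;> nlinarith
  have hcomb : (1 - δ / 2) • vertex ε = (1 - a) • x + a • q := by
    ext i
    simp only [Pi.smul_apply, Pi.add_apply, smul_eq_mul, q, vertex]
    rw [show δ = 3 * a by ring]
    field_simp
    linear_combination (2 * (1 - a)) * x i * sgn_mul_self (ε i)
  exact hε (hcomb ▸ hK.convex hx hq (by linarith) ha0.le (by ring))

lemma exists_mem_dotPolar_one_lt [Fintype ι] (hK : Convex ℝ K) (hclosed : IsClosed K)
    (h0 : 0 ∈ K) {p : ι → ℝ} (hp : p ∉ K) : ∃ y ∈ dotPolar K, 1 < p ⬝ᵥ y := by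
  classical
  obtain ⟨g, u, hgK, hgp⟩ := geometric_hahn_banach_closed_point hK hclosed hp
  have hu : 0 < u := by simpa using hgK 0 h0
  have hdot (z : ι → ℝ) : z ⬝ᵥ (u⁻¹ • (dotProductEquiv ℝ ι).symm g.toLinearMap) = u⁻¹ * g z := by
    rw [dotProduct_smul, smul_eq_mul, dotProduct_comm, ← dotProductEquiv_apply_apply,
      LinearEquiv.apply_symm_apply]
    rfl
  refine ⟨u⁻¹ • (dotProductEquiv ℝ ι).symm g.toLinearMap, fun z hz => ?_, ?_⟩
  · rw [hdot, inv_mul_le_iff₀ hu, mul_one]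
    exact (hgK z hz).le
  · rwa [hdot, lt_inv_mul_iff₀ hu, mul_one]

lemma neg_le_of_sum_abs_le_sum_add [Fintype ι] {b : ι → ℝ} {r : ℝ}
    (h : ∑ i, |b i| ≤ ∑ i, b i + 2 * r) (i : ι) : -r ≤ b i := by
  have hle : |b i| - b i ≤ ∑ j, (|b j| - b j) :=
    Finset.single_le_sum (f := fun j => |b j| - b j)
      (fun j _ => sub_nonneg.2 (le_abs_self (b j))) (Finset.mem_univ i)
  rw [Finset.sum_sub_distrib] at hle
  linarith [neg_abs_le (b i)]

end Vertex

section TestPoint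

variable {n : ℕ} {K : Set (Fin n → ℝ)} {δ : ℝ} {X Y : (Fin n → ℝ) → (Fin n → ℝ)}

lemma vertex_dotProduct_faceCenter (f : SignedFlag n) (m : Fin n) :
    vertex f.2 ⬝ᵥ faceCenter f m = m + 1 := by
  rw [dotProduct_comm, faceCenter_dotProduct]
  simp [vertex, sgn_mul_self, Fin.card_Iic]

/-- The vertex with signs `ε` pulled slightly towards the center of its `j`-th facet. Depending on
whether it belongs to `K`, this point or a functional separating it from `K` yields an overshoot. -/
def testPoint (δ : ℝ) (ε : Fin n → ℤˣ) (j : Fin n) : Fin n → ℝ :=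
  (1 - δ / (12 * n) - 2 * n ^ 2 * δ) • vertex ε + (2 * n ^ 2 * δ) • Pi.single j (sgn (ε j))

lemma testPoint_dotProduct (δ : ℝ) (ε : Fin n → ℤˣ) (j : Fin n) (y : Fin n → ℝ) :
    testPoint δ ε j ⬝ᵥ y = (1 - δ / (12 * n) - 2 * n ^ 2 * δ) * (vertex ε ⬝ᵥ y) +
      2 * n ^ 2 * δ * (sgn (ε j) * y j) := by
  simp [testPoint, add_dotProduct, smul_dotProduct]

variable [NeZero n]

lemma faceCenter_top (f : SignedFlag n) : faceCenter f ⊤ = vertex f.2 := by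
  ext i; simp [faceCenter, vertex]

lemma faceCenter_zero (f : SignedFlag n) :
    faceCenter f 0 = Pi.single (f.1 0) (sgn (f.2 (f.1 0))) := by
  ext i
  rcases eq_or_ne i (f.1 0) with rfl | hi
  · simp [faceCenter]
  · rw [Pi.single_eq_of_ne hi, faceCenter, if_neg]
    rwa [nonpos_iff_eq_zero, Equiv.symm_apply_eq]

lemma tailSum_zero (t : Fin n → ℝ) : tailSum t 0 = ∑ m, t m := by
  rw [tailSum, Finset.Ici_zero_eq_univ]

lemma IsContactMaps.map_faceCenter_zero (h : IsContactMaps K δ X Y) (f : SignedFlag n) :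
    X (faceCenter f 0) = faceCenter f 0 ∧ Y (faceCenter f 0) = faceCenter f 0 :=
  (h.isContactPair f 0).eq_of_card_eq_one (by simp [card_signSupport_faceCenter])

lemma pow_mul_le_of_small (hδ : 0 ≤ δ) (hsmall : 10000 * (n : ℝ) ^ 6 * δ ≤ 1) {k : ℕ}
    (hk : k ≤ 6) : (n : ℝ) ^ k * δ ≤ 1 / 10000 := by
  have hn : (1 : ℝ) ≤ n := Nat.one_le_cast.2 NeZero.one_le
  have hpow : (n : ℝ) ^ k * δ ≤ (n : ℝ) ^ 6 * δ := by gcongr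
  linarith

lemma IsContactMaps.exists_flagMatrix_mulVec_eq_vertex_sub (h : IsContactMaps K δ X Y)
    (hδ : 0 ≤ δ) (hsmall : 10000 * (n : ℝ) ^ 6 * δ ≤ 1) {f : SignedFlag n}
    (hgap : δ / (3 * n) ≤ 1 - sgn (f.2 (f.1 0)) * X (vertex f.2) (f.1 0)) :
    ∃ μ, flagMatrix X f *ᵥ μ = vertex f.2 - X (vertex f.2) ∧ (∀ m, -(1 / (n : ℝ)) ≤ μ m) ∧
      δ / (4 * n) ≤ ∑ m, μ m := by
  have hn : (0 : ℝ) < n := Nat.cast_pos.2 (NeZero.pos n)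
  have hn2 := pow_mul_le_of_small (n := n) hδ hsmall (k := 2) (by norm_num)
  have hn3 := pow_mul_le_of_small (n := n) hδ hsmall (k := 3) (by norm_num)
  have hn4 := pow_mul_le_of_small (n := n) hδ hsmall (k := 4) (by norm_num)
  have hX := h.movesFaceCentersBy_left hδ
  have hX4 : 4 * n * (n * δ) ≤ 1 := by linarith
  obtain ⟨μ, hμ⟩ := exists_flagMatrix_mulVec_eq hX hX4 f (vertex f.2 - X (vertex f.2))
  have habs : ∑ m, |μ m| ≤ 4 * n * (n * δ) :=
    sum_abs_le_of_flagMatrix_mulVec_eq hX hX4 hμ fun i => by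
      rw [Pi.sub_apply, abs_sub_comm, ← faceCenter_top]
      exact hX f ⊤ i
  refine ⟨μ, hμ, fun m => ?_, ?_⟩
  · have hle : |μ m| ≤ 4 * n * (n * δ) :=
      (Finset.single_le_sum (fun k _ => abs_nonneg (μ k)) (Finset.mem_univ m)).trans habs
    have hinv : 4 * n * (n * δ) ≤ 1 / n := by rw [le_div_iff₀ hn]; linarith
    linarith [neg_abs_le (μ m)]
  · have hsum := abs_tailSum_sub_le hX hμ 0
    rw [tailSum_zero, Pi.sub_apply, mul_sub, vertex, sgn_mul_self] at hsum
    have hquad : n * δ * ∑ m, |μ m| ≤ δ / (12 * n) :=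
      calc n * δ * ∑ m, |μ m| ≤ n * δ * (4 * n * (n * δ)) := by gcongr
        _ ≤ δ / (12 * n) := by rw [le_div_iff₀ (by positivity)]; nlinarith
    have hdiff : δ / (3 * n) - δ / (12 * n) = δ / (4 * n) := by ring
    linarith [(abs_le.1 hsum).1]

lemma IsContactMaps.hasOvershoot_left (h : IsContactMaps K δ X Y) (hδ : 0 ≤ δ)
    (hsmall : 10000 * (n : ℝ) ^ 6 * δ ≤ 1) {f : SignedFlag n}
    (hgap : δ / (3 * n) ≤ 1 - sgn (f.2 (f.1 0)) * X (vertex f.2) (f.1 0))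
    (htest : testPoint δ f.2 (f.1 0) ∈ K) :
    HasOvershoot K (fun m => X (faceCenter f m)) (δ / (48 * n)) := by
  have hn : (1 : ℝ) ≤ n := Nat.one_le_cast.2 NeZero.one_le
  obtain ⟨μ, hμ, hμneg, hμsum⟩ := h.exists_flagMatrix_mulVec_eq_vertex_sub hδ hsmall hgap
  have hn2 := pow_mul_le_of_small (n := n) hδ hsmall (k := 2) (by norm_num)
  have hτ : δ / (12 * n) ≤ (n : ℝ) ^ 2 * δ := by
    rw [div_le_iff₀ (by positivity)]
    nlinarith [show 0 ≤ δ * ((n : ℝ) ^ 3 - 1) from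
      mul_nonneg hδ (sub_nonneg.2 (one_le_pow₀ hn)), show 0 ≤ (n : ℝ) ^ 3 * δ by positivity]
  have hτ0 : 0 ≤ δ / (12 * n) := by positivity
  set β : ℝ := 2 * n ^ 2 * δ with hβ
  have hβ0 : 0 ≤ β := by positivity
  set q : ℝ := 1 - δ / (12 * n) - β with hq
  have hq2 : 1 / 2 ≤ q := by linarith
  refine ⟨q • (Pi.single ⊤ 1 + μ) + β • Pi.single 0 1, fun m => ?_, ?_, ?_⟩
  · have htop : 0 ≤ (Pi.single ⊤ 1 : Fin n → ℝ) m :=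
      (Pi.single_nonneg.2 zero_le_one : (0 : Fin n → ℝ) ≤ _) m
    have hzero : 0 ≤ (Pi.single 0 1 : Fin n → ℝ) m :=
      (Pi.single_nonneg.2 zero_le_one : (0 : Fin n → ℝ) ≤ _) m
    simp only [Pi.add_apply, Pi.smul_apply, smul_eq_mul, Fintype.card_fin]
    nlinarith [hμneg m, mul_nonneg hβ0 hzero, show 0 ≤ 1 / (n : ℝ) by positivity]
  · simp only [Pi.add_apply, Pi.smul_apply, smul_eq_mul, Finset.sum_add_distrib, ← Finset.mul_sum,
      Finset.sum_pi_single', Finset.mem_univ, if_true]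
    have h4 : δ / (4 * n) = 3 * (δ / (12 * n)) := by ring
    have h48 : δ / (48 * n) = δ / (12 * n) / 4 := by ring
    rw [h4] at hμsum
    nlinarith
  · have hcol (m : Fin n) : flagMatrix X f *ᵥ Pi.single m 1 = X (faceCenter f m) := by
      ext i; simp [flagMatrix]
    rw [← flagMatrix_mulVec, Matrix.mulVec_add, Matrix.mulVec_smul, Matrix.mulVec_smul,
      Matrix.mulVec_add, hcol, hcol, hμ, faceCenter_top, add_sub_cancel,
      (h.map_faceCenter_zero f).1, faceCenter_zero]
    exact htest

end TestPoint

section PolarOvershoot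

variable {n : ℕ}

lemma neg_two_mul_le_of_abs_tailSum_sub_le {ν b : Fin n → ℝ} {e : ℝ} (hb : Antitone b)
    (hneg : ∀ l, -e ≤ b l) (h : ∀ l, |tailSum ν l - b l| ≤ e) (l : Fin n) : -(2 * e) ≤ ν l := by
  have hl := (abs_le.1 (h l)).1
  rcases tailSum_eq_or ν l with heq | ⟨l', hll', heq⟩
  · linarith [hneg l]
  · linarith [(abs_le.1 (h l')).2, hb hll'.le]

lemma sum_Ioi_le_of_abs_tailSum_sub_le {ν b : Fin n → ℝ} {e : ℝ}
    (h : ∀ l, |tailSum ν l - b l| ≤ e) (l : Fin n) :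
    ∑ m ∈ Finset.Ioi l, ν m ≤ ∑ i, |b i| - |b l| + e := by
  have htail := tailSum_eq_add_sum_Ioi ν l
  rcases tailSum_eq_or ν l with heq | ⟨l', hll', heq⟩
  · have he : 0 ≤ e := (abs_nonneg _).trans (h l)
    have hle : |b l| ≤ ∑ i, |b i| :=
      Finset.single_le_sum (fun i _ => abs_nonneg (b i)) (Finset.mem_univ l)
    linarith
  · have hpair : |b l| + |b l'| ≤ ∑ i, |b i| :=
      Finset.add_le_sum (fun i _ => abs_nonneg (b i)) (Finset.mem_univ l) (Finset.mem_univ l')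
        hll'.ne
    linarith [(abs_le.1 (h l')).2, le_abs_self (b l')]

lemma sum_Ioi_abs_le_of_abs_tailSum_sub_le {ν b : Fin n → ℝ} {e : ℝ}
    (hν : ∀ l, -(2 * e) ≤ ν l) (h : ∀ l, |tailSum ν l - b l| ≤ e) (l : Fin n) :
    ∑ m ∈ Finset.Ioi l, |ν m| ≤ ∑ i, |b i| - |b l| + 5 * n * e := by
  have he : 0 ≤ e := (abs_nonneg _).trans (h l)
  have habs (m : Fin n) : |ν m| ≤ ν m + 4 * e := abs_le.2 ⟨by linarith [hν m], by linarith⟩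
  have hcard : ((Finset.Ioi l).card : ℝ) ≤ n := by
    exact_mod_cast (Finset.card_le_univ _).trans_eq (Fintype.card_fin n)
  have hn : (1 : ℝ) ≤ n := Nat.one_le_cast.2 l.pos
  calc ∑ m ∈ Finset.Ioi l, |ν m| ≤ ∑ m ∈ Finset.Ioi l, (ν m + 4 * e) :=
        Finset.sum_le_sum fun m _ => habs m
    _ = ∑ m ∈ Finset.Ioi l, ν m + (Finset.Ioi l).card * (4 * e) := by
        rw [Finset.sum_add_distrib, Finset.sum_const, nsmul_eq_mul]
    _ ≤ ∑ i, |b i| - |b l| + e + n * (4 * e) := by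
        gcongr
        exact sum_Ioi_le_of_abs_tailSum_sub_le h l
    _ ≤ ∑ i, |b i| - |b l| + 5 * n * e := by nlinarith

lemma exists_perm_antitone_comp (b : Fin n → ℝ) : ∃ σ : Equiv.Perm (Fin n), Antitone (b ∘ σ) :=
  ⟨_, Tuple.monotone_sort (OrderDual.toDual ∘ b)⟩

lemma vertex_dotProduct_le_sum_abs (ε : Fin n → ℤˣ) (y : Fin n → ℝ) :
    vertex ε ⬝ᵥ y ≤ ∑ i, |y i| :=
  Finset.sum_le_sum fun i _ => (le_abs_self _).trans_eq (abs_sgn_mul (ε i) (y i))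

variable [NeZero n] {K : Set (Fin n → ℝ)} {δ η : ℝ} {X Y : (Fin n → ℝ) → (Fin n → ℝ)}
  {y : Fin n → ℝ}

lemma vertex_dotProduct_flagMatrix_mulVec_le (hY : MovesFaceCentersBy Y η) {f : SignedFlag n}
    (hY0 : Y (faceCenter f 0) = faceCenter f 0) (ν : Fin n → ℝ) :
    vertex f.2 ⬝ᵥ (flagMatrix Y f *ᵥ ν) ≤
      ∑ m : Fin n, ((m : ℝ) + 1) * ν m + n * η * ∑ m ∈ Finset.Ioi 0, |ν m| := by
  set err : Fin n → ℝ := fun m => vertex f.2 ⬝ᵥ (Y (faceCenter f m) - faceCenter f m) with herr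
  have hsplit (m : Fin n) : vertex f.2 ⬝ᵥ Y (faceCenter f m) = (m + 1) + err m := by
    rw [herr, ← vertex_dotProduct_faceCenter f m, ← dotProduct_add, add_sub_cancel]
  have herr0 : err 0 = 0 := by simp [herr, hY0]
  have herr_le (m : Fin n) : ν m * err m ≤ n * η * |ν m| :=
    calc ν m * err m ≤ |ν m| * |err m| := (le_abs_self _).trans_eq (abs_mul _ _)
      _ ≤ |ν m| * (n * η) := by
        gcongr
        exact hY.abs_dotProduct_le (fun i => (abs_sgn _).le) f m
      _ = n * η * |ν m| := mul_comm _ _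
  have hsum : ∑ m, ν m * err m = ∑ m ∈ Finset.Ioi 0, ν m * err m :=
    (Finset.sum_subset (Finset.subset_univ _) fun m _ hm => by
      have : m = 0 := by simpa using hm
      rw [this, herr0, mul_zero]).symm
  simp only [flagMatrix_mulVec, dotProduct_sum, dotProduct_smul, smul_eq_mul, hsplit, mul_add,
    mul_one, add_mul, one_mul, Finset.sum_add_distrib, hsum, Finset.mul_sum]
  refine add_le_add (le_of_eq ?_) (Finset.sum_le_sum fun m _ => herr_le m)
  simp only [mul_comm]

lemma sum_abs_le_vertex_dotProduct_add (hδ : 0 ≤ δ) (hsmall : 10000 * (n : ℝ) ^ 6 * δ ≤ 1)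
    (hy : ∑ i, |y i| ≤ 1 + 2 * δ) {ε : Fin n → ℤˣ} {j : Fin n}
    (htest : 1 < testPoint δ ε j ⬝ᵥ y) :
    1 < ∑ i, |y i| ∧ ∑ i, |y i| ≤ vertex ε ⬝ᵥ y + 4 * δ := by
  rw [testPoint_dotProduct] at htest
  have hn : (1 : ℝ) ≤ n := Nat.one_le_cast.2 NeZero.one_le
  have hτ0 : 0 ≤ δ / (12 * n) := by positivity
  have hτ : δ / (12 * n) ≤ 1 / 4 := by
    have h0 := pow_mul_le_of_small (n := n) hδ hsmall (k := 0) (by norm_num)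
    exact (div_le_self hδ (by linarith)).trans (by linarith)
  have hβ0 : 0 ≤ 2 * n ^ 2 * δ := by positivity
  have hβ : 2 * n ^ 2 * δ ≤ 1 / 4 := by
    have h2 := pow_mul_le_of_small (n := n) hδ hsmall (k := 2) (by norm_num)
    linarith
  have hS := vertex_dotProduct_le_sum_abs ε y
  have hyj : sgn (ε j) * y j ≤ ∑ i, |y i| :=
    ((le_abs_self _).trans_eq (abs_sgn_mul (ε j) (y j))).trans
      (Finset.single_le_sum (fun i _ => abs_nonneg (y i)) (Finset.mem_univ j))
  have hT : 0 ≤ ∑ i, |y i| := Finset.sum_nonneg fun i _ => abs_nonneg _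
  have hβj := mul_le_mul_of_nonneg_left hyj hβ0
  constructor <;> nlinarith

lemma exists_flagMatrix_mulVec_eq_of_sum_abs_le (hY : MovesFaceCentersBy Y (2 * (n * δ)))
    (hδ : 0 ≤ δ) (hsmall : 10000 * (n : ℝ) ^ 6 * δ ≤ 1) (hy : ∑ i, |y i| ≤ 1 + 2 * δ)
    {ε : Fin n → ℤˣ} (hyε : ∑ i, |y i| ≤ vertex ε ⬝ᵥ y + 4 * δ) :
    ∃ (f : SignedFlag n) (ν : Fin n → ℝ), f.2 = ε ∧ flagMatrix Y f *ᵥ ν = y ∧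
      (∀ m, -(32 * n ^ 2 * δ) ≤ ν m) ∧
      ∀ j, ∑ m ∈ Finset.Ioi 0, |ν m| ≤ ∑ i, |y i| - sgn (ε j) * y j + 80 * n ^ 3 * δ := by
  have hn : (1 : ℝ) ≤ n := Nat.one_le_cast.2 NeZero.one_le
  have hδ0 := pow_mul_le_of_small (n := n) hδ hsmall (k := 0) (by norm_num)
  have hδ2 := pow_mul_le_of_small (n := n) hδ hsmall (k := 2) (by norm_num)
  obtain ⟨σ, hσ⟩ := exists_perm_antitone_comp fun i => sgn (ε i) * y i
  set b : Fin n → ℝ := (fun i => sgn (ε i) * y i) ∘ σ with hb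
  have hY4 : 4 * n * (2 * (n * δ)) ≤ 1 := by linarith
  obtain ⟨ν, hν⟩ := exists_flagMatrix_mulVec_eq hY hY4 (σ, ε) y
  have hyi (i : Fin n) : |y i| ≤ 2 :=
    (Finset.single_le_sum (fun k _ => abs_nonneg (y k)) (Finset.mem_univ i)).trans (by linarith)
  have htail (l : Fin n) : |tailSum ν l - b l| ≤ 16 * n ^ 2 * δ :=
    calc |tailSum ν l - b l| ≤ 2 * (n * δ) * ∑ m, |ν m| := abs_tailSum_sub_le hY hν l
      _ ≤ 2 * (n * δ) * (4 * n * 2) := by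
        gcongr
        exact sum_abs_le_of_flagMatrix_mulVec_eq hY hY4 hν hyi
      _ = 16 * n ^ 2 * δ := by ring
  have hbneg (l : Fin n) : -(16 * n ^ 2 * δ) ≤ b l := by
    have hle : -(2 * δ) ≤ b l :=
      neg_le_of_sum_abs_le_sum_add (b := fun i => sgn (ε i) * y i)
        (by simp only [abs_sgn_mul]; exact hyε.trans_eq (by simp [vertex, dotProduct]; ring)) _
    nlinarith [one_le_pow₀ hn (n := 2)]
  have hsum : ∑ l, |b l| = ∑ i, |y i| := by
    simp only [hb, Function.comp_apply, abs_sgn_mul]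
    exact Equiv.sum_comp σ fun i => |y i|
  have hνneg := neg_two_mul_le_of_abs_tailSum_sub_le hσ hbneg htail
  refine ⟨(σ, ε), ν, rfl, hν, fun m => by linarith [hνneg m], fun j => ?_⟩
  have hj : sgn (ε j) * y j ≤ b 0 := by
    simpa [hb] using hσ (Fin.zero_le (σ.symm j))
  have hIoi := sum_Ioi_abs_le_of_abs_tailSum_sub_le hνneg htail 0
  rw [hsum] at hIoi
  linarith [le_abs_self (b 0)]

lemma one_add_div_le_of_tail_le (hδ : 0 ≤ δ) (hsmall : 10000 * (n : ℝ) ^ 6 * δ ≤ 1)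
    (hT : 1 < ∑ i, |y i|) {ε : Fin n → ℤˣ} (hTS : ∑ i, |y i| ≤ vertex ε ⬝ᵥ y + 4 * δ)
    {j : Fin n} (htest : 1 < testPoint δ ε j ⬝ᵥ y) {tail total : ℝ}
    (htail : tail ≤ ∑ i, |y i| - sgn (ε j) * y j + 80 * n ^ 3 * δ)
    (htotal : vertex ε ⬝ᵥ y ≤ total + n * (2 * (n * δ)) * tail) :
    1 + δ / (48 * n) ≤ total := by
  rw [testPoint_dotProduct] at htest
  have hn : (1 : ℝ) ≤ n := Nat.one_le_cast.2 NeZero.one_le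
  have hδ0 := pow_mul_le_of_small (n := n) hδ hsmall (k := 0) (by norm_num)
  have hτS : δ / (12 * n) * (1 / 2) ≤ δ / (12 * n) * (vertex ε ⬝ᵥ y) := by
    gcongr
    linarith
  have hδn : 4 * δ ≤ 4 * n ^ 3 * δ := by nlinarith [one_le_pow₀ hn (n := 3)]
  have herr : n * (2 * (n * δ)) * tail ≤
      n * (2 * (n * δ)) * (vertex ε ⬝ᵥ y - sgn (ε j) * y j + 84 * n ^ 3 * δ) := by
    gcongr
    linarith
  have hquad : n * (2 * (n * δ)) * (84 * n ^ 3 * δ) ≤ δ / (48 * n) := by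
    rw [le_div_iff₀ (by positivity)]
    nlinarith
  have h48 : δ / (48 * n) = δ / (12 * n) / 4 := by ring
  linarith

lemma IsContactMaps.exists_hasOvershoot_right (h : IsContactMaps K δ X Y) (hK : IsNearCube K δ)
    (hsmall : 10000 * (n : ℝ) ^ 6 * δ ≤ 1) (hy : y ∈ dotPolar K) {ε : Fin n → ℤˣ} {j : Fin n}
    (htest : 1 < testPoint δ ε j ⬝ᵥ y) :
    ∃ f : SignedFlag n, HasOvershoot (dotPolar K)
      (fun m : Fin n => (1 / ((m : ℝ) + 1)) • Y (faceCenter f m)) (δ / (48 * n)) := by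
  have hδ := hK.pos.le
  have hn : (1 : ℝ) ≤ n := Nat.one_le_cast.2 NeZero.one_le
  have hpow {k : ℕ} (hk : k ≤ 6) := pow_mul_le_of_small (n := n) hδ hsmall hk
  have hnδ : n * δ ≤ 1 / 2 := by linarith [hpow (k := 1) (by norm_num)]
  have hYmoves := h.movesFaceCentersBy_right hK hnδ
  have hyT := hK.sum_abs_le hy
  obtain ⟨hT1, hTS⟩ := sum_abs_le_vertex_dotProduct_add hδ hsmall hyT htest
  obtain ⟨f, ν, rfl, hν, hνneg, hνtail⟩ :=
    exists_flagMatrix_mulVec_eq_of_sum_abs_le hYmoves hδ hsmall hyT hTS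
  refine ⟨f, fun m => ((m : ℝ) + 1) * ν m, fun m => ?_, ?_, ?_⟩
  · have hm : (m : ℝ) + 1 ≤ n := by exact_mod_cast m.2
    have hinv : n * (32 * n ^ 2 * δ) ≤ 1 / n := by
      rw [le_div_iff₀ (by linarith)]
      linarith [hpow (k := 4) (by norm_num)]
    have hneg : ((m : ℝ) + 1) * (32 * n ^ 2 * δ) ≤ n * (32 * n ^ 2 * δ) := by gcongr
    rw [Fintype.card_fin]
    nlinarith [hνneg m]
  · have hS := vertex_dotProduct_flagMatrix_mulVec_le hYmoves (h.map_faceCenter_zero f).2 ν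
    rw [hν] at hS
    exact one_add_div_le_of_tail_le hδ hsmall hT1 hTS htest (hνtail j) hS
  · convert hy
    rw [← hν, flagMatrix_mulVec]
    refine Finset.sum_congr rfl fun m _ => ?_
    rw [smul_smul, mul_right_comm, mul_one_div_cancel (by positivity), one_mul]

end PolarOvershoot

/-! ### The volume product in coordinates -/

section VolumeProduct

lemma prod_one_div_add_one (n : ℕ) : ∏ m : Fin n, 1 / ((m : ℝ) + 1) = 1 / (n.factorial : ℝ) := by
  rw [Fin.prod_univ_eq_prod_range (fun m : ℕ => 1 / ((m : ℝ) + 1)) n, Finset.prod_div_distrib,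
    Finset.prod_const_one, ← Finset.prod_range_add_one_eq_factorial]
  push_cast
  rfl

lemma one_add_le_one_add_mul_one_add {a b γ R : ℝ} (ha : |a| ≤ R) (hb : |b| ≤ R)
    (hab : γ + R ^ 2 ≤ a + b) : 1 + γ ≤ (1 + a) * (1 + b) := by
  have hmul : |a * b| ≤ R ^ 2 := by
    rw [abs_mul, sq]
    exact mul_le_mul ha hb (abs_nonneg b) ((abs_nonneg a).trans ha)
  linarith [(abs_le.1 hmul).1]

lemma eventually_mul_le_nhds_zero (a : ℝ) {b : ℝ} (hb : 0 < b) : ∀ᶠ δ in 𝓝 (0 : ℝ), a * δ ≤ b :=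
  (Continuous.tendsto' (by fun_prop) 0 0 (mul_zero a)).eventually_le_const hb

variable {n : ℕ} {K : Set (Fin n → ℝ)} {δ : ℝ} {X Y : (Fin n → ℝ) → (Fin n → ℝ)}

lemma IsContactMaps.movesFaceCentersBy_both (h : IsContactMaps K δ X Y) (hK : IsNearCube K δ)
    (hnδ : n * δ ≤ 1 / 2) :
    MovesFaceCentersBy X (2 * (n * δ)) ∧ MovesFaceCentersBy Y (2 * (n * δ)) := by
  have hδ := hK.pos.le
  have hle : n * δ ≤ 2 * (n * δ) := le_mul_of_one_le_left (by positivity) one_le_two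
  exact ⟨fun f m i => (h.movesFaceCentersBy_left hδ f m i).trans hle,
    h.movesFaceCentersBy_right hK hnδ⟩

/-- A bound, relative to `δ`, for the deviation from `1` of the two volume estimates of
`le_volume_of_hasOvershoot` after normalization by the cube and its polar. -/
def deviationConst (n : ℕ) : ℝ := 2 * n ^ 3 + 4 * errorConst n * n ^ 2 + gainConst n

lemma abs_meanDisplacement_sub_add_le (hδ : 0 ≤ δ) (hδ1 : δ ≤ 1)
    (hY : MovesFaceCentersBy Y (2 * (n * δ))) {κ : ℝ} (hκ0 : 0 ≤ κ) (hκ : κ ≤ δ) :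
    |meanDisplacement Y - errorConst n * (2 * (n * δ)) ^ 2 + gainConst n * κ| ≤
      deviationConst n * δ := by
  have hC := errorConst_pos n
  have hc := gainConst_pos n
  have herr : errorConst n * (2 * (n * δ)) ^ 2 ≤ 4 * errorConst n * n ^ 2 * δ :=
    calc errorConst n * (2 * (n * δ)) ^ 2 = 4 * errorConst n * n ^ 2 * (δ * δ) := by ring
      _ ≤ 4 * errorConst n * n ^ 2 * δ := by gcongr; exact mul_le_of_le_one_left hδ hδ1
  have hgain : gainConst n * κ ≤ gainConst n * δ := by gcongr
  have hgain0 : 0 ≤ gainConst n * κ := by positivity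
  have herr0 : 0 ≤ errorConst n * (2 * (n * δ)) ^ 2 := by positivity
  have hmean := abs_le.1 hY.abs_meanDisplacement_le
  rw [deviationConst, abs_le]
  constructor <;> linarith [hmean.1, hmean.2]

variable [NeZero n]

lemma IsContactMaps.exists_hasOvershoot_or (h : IsContactMaps K δ X Y) (hK : IsNearCube K δ)
    (hsmall : 10000 * (n : ℝ) ^ 6 * δ ≤ 1) {z : Fin n → ℝ} (hz : ∀ i, |z i| ≤ 1 - δ / 2)
    (hzK : z ∉ K) :
    (∃ f, HasOvershoot K (fun m => X (faceCenter f m)) (δ / (48 * n))) ∨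
      ∃ f, HasOvershoot (dotPolar K)
        (fun m : Fin n => (1 / ((m : ℝ) + 1)) • Y (faceCenter f m)) (δ / (48 * n)) := by
  have hhalf : 0 ≤ 1 - δ / 2 := by linarith [hK.le_half]
  obtain ⟨ε, hε⟩ := exists_smul_vertex_notMem hK.convex hhalf hz hzK
  have hvertex : X (vertex ε) ∈ K := by
    rw [← faceCenter_top (1, ε)]
    exact (h.isContactPair (1, ε) ⊤).mem
  obtain ⟨j, hj⟩ := hK.exists_div_le_one_sub hε hvertex
  rw [Fintype.card_fin] at hj
  by_cases htest : testPoint δ ε j ∈ K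
  · refine .inl ⟨(Equiv.swap 0 j, ε), h.hasOvershoot_left hK.pos.le hsmall ?_ ?_⟩
    · simpa using hj
    · simpa using htest
  · obtain ⟨y, hy, hy1⟩ := exists_mem_dotPolar_one_lt hK.convex hK.isCompact.isClosed
      (mem_of_mem_nhds hK.mem_nhds_zero) htest
    exact .inr (h.exists_hasOvershoot_right hK hsmall hy hy1)

lemma IsContactMaps.exists_hasOvershoot_and (h : IsContactMaps K δ X Y) (hK : IsNearCube K δ)
    (hsmall : 10000 * (n : ℝ) ^ 6 * δ ≤ 1) {z : Fin n → ℝ} (hz : ∀ i, |z i| ≤ 1 - δ / 2)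
    (hzK : z ∉ K) :
    ∃ κ₁ κ₂ : ℝ, 0 ≤ κ₁ ∧ 0 ≤ κ₂ ∧ κ₁ + κ₂ = δ / (48 * n) ∧
      (∃ f, HasOvershoot K (fun m => X (faceCenter f m)) κ₁) ∧
      ∃ f, HasOvershoot (dotPolar K)
        (fun m : Fin n => (1 / ((m : ℝ) + 1)) • Y (faceCenter f m)) κ₂ := by
  have hδ := hK.pos
  rcases h.exists_hasOvershoot_or hK hsmall hz hzK with hX | hY
  · exact ⟨_, 0, by positivity, le_rfl, add_zero _, hX,
      1, hasOvershoot_zero fun m => h.smul_mem_dotPolar 1 m⟩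
  · exact ⟨0, _, le_rfl, by positivity, zero_add _,
      ⟨1, hasOvershoot_zero fun m => (h.isContactPair 1 m).mem⟩, hY⟩

/-- The gain in the volume product per unit of `δ`. -/
def productGainConst (n : ℕ) : ℝ := 4 ^ n / n.factorial * (gainConst n / (96 * n))

lemma productGainConst_pos : 0 < productGainConst n := by
  have hn : (0 : ℝ) < n := Nat.cast_pos.2 (NeZero.pos n)
  have hc := gainConst_pos n
  unfold productGainConst
  positivity

lemma IsContactMaps.one_add_le_mul (h : IsContactMaps K δ X Y) (hK : IsNearCube K δ)
    (hnδ : n * δ ≤ 1 / 2) (hdev : deviationConst n * δ ≤ 1)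
    (hquad : (8 * errorConst n * n ^ 2 + deviationConst n ^ 2) * δ ≤ gainConst n / (96 * n))
    {κ₁ κ₂ : ℝ} (hκ₁ : 0 ≤ κ₁) (hκ₂ : 0 ≤ κ₂) (hκ : κ₁ + κ₂ = δ / (48 * n)) :
    0 ≤ 1 + meanDisplacement X - errorConst n * (2 * (n * δ)) ^ 2 + gainConst n * κ₁ ∧
    1 + gainConst n / (96 * n) * δ ≤
      (1 + meanDisplacement X - errorConst n * (2 * (n * δ)) ^ 2 + gainConst n * κ₁) *
        (1 + meanDisplacement Y - errorConst n * (2 * (n * δ)) ^ 2 + gainConst n * κ₂) := by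
  have hn : (1 : ℝ) ≤ n := Nat.one_le_cast.2 NeZero.one_le
  have hδ := hK.pos.le
  have hδ1 : δ ≤ 1 := by linarith [hK.le_half]
  have hκδ : δ / (48 * n) ≤ δ := div_le_self hδ (by linarith)
  obtain ⟨hX, hY⟩ := h.movesFaceCentersBy_both hK hnδ
  have hdevX := abs_meanDisplacement_sub_add_le hδ hδ1 hX hκ₁ (by linarith)
  have hdevY := abs_meanDisplacement_sub_add_le hδ hδ1 hY hκ₂ (by linarith)
  have hmean := h.meanDisplacement_add_nonneg hnδ
  have hgain : gainConst n * κ₁ + gainConst n * κ₂ = 2 * (gainConst n / (96 * n) * δ) := by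
    rw [← mul_add, hκ]; ring
  have hsq := mul_le_mul_of_nonneg_right hquad hδ
  refine ⟨by linarith [(abs_le.1 hdevX).1], ?_⟩
  simp only [add_sub_assoc, add_assoc]
  refine one_add_le_one_add_mul_one_add (R := deviationConst n * δ) ?_ ?_ ?_
  · simpa only [add_sub_assoc, add_assoc] using hdevX
  · simpa only [add_sub_assoc, add_assoc] using hdevY
  · linarith

lemma IsContactMaps.le_volume_mul_volume_dotPolar (h : IsContactMaps K δ X Y)
    (hK : IsNearCube K δ) (hsmall : 10000 * (n : ℝ) ^ 6 * δ ≤ 1)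
    (herror : errorConst n * (2 * n) * δ ≤ 1) (hdev : deviationConst n * δ ≤ 1)
    (hquad : (8 * errorConst n * n ^ 2 + deviationConst n ^ 2) * δ ≤ gainConst n / (96 * n))
    {z : Fin n → ℝ} (hz : ∀ i, |z i| ≤ 1 - δ / 2) (hzK : z ∉ K) :
    ENNReal.ofReal (4 ^ n / n.factorial + productGainConst n * δ) ≤
      volume K * volume (dotPolar K) := by
  have hn : (1 : ℝ) ≤ n := Nat.one_le_cast.2 NeZero.one_le
  have hδ := hK.pos.le
  have hnδ : n * δ ≤ 1 / 2 := by
    linarith [pow_mul_le_of_small (n := n) hδ hsmall (k := 1) (by norm_num)]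
  have hκ_le : δ / (48 * n) ≤ 1 := (div_le_self hδ (by linarith)).trans (by linarith [hK.le_half])
  obtain ⟨hX, hY⟩ := h.movesFaceCentersBy_both hK hnδ
  obtain ⟨κ₁, κ₂, hκ₁, hκ₂, hκ, ⟨f₁, hf₁⟩, f₂, hf₂⟩ := h.exists_hasOvershoot_and hK hsmall hz hzK
  have hvolK := le_volume_of_hasOvershoot hK.convex (mem_of_mem_nhds hK.mem_nhds_zero)
    (w := fun _ => 1) (fun _ => one_pos) h.map_zero_left hX (by linarith)
    (fun f m => by simpa only [one_smul] using (h.isContactPair f m).mem) hκ₁ (by linarith) f₁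
    (by simpa only [one_smul] using hf₁)
  have hvolP := le_volume_of_hasOvershoot (convex_dotPolar K) (zero_mem_dotPolar K)
    (fun _ => by positivity) h.map_zero_right hY (by linarith) h.smul_mem_dotPolar hκ₂
    (by linarith) f₂ hf₂
  obtain ⟨hnonneg, hprod⟩ := h.one_add_le_mul hK hnδ hdev hquad hκ₁ hκ₂ hκ
  refine le_trans ?_ (mul_le_mul' hvolK hvolP)
  rw [prod_one_div_add_one, Finset.prod_const_one, ← ENNReal.ofReal_mul (by positivity)]
  refine ENNReal.ofReal_le_ofReal ?_
  calc (4 : ℝ) ^ n / n.factorial + productGainConst n * δ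
      = 4 ^ n / n.factorial * (1 + gainConst n / (96 * n) * δ) := by rw [productGainConst]; ring
    _ ≤ 4 ^ n / n.factorial * _ := mul_le_mul_of_nonneg_left hprod (by positivity)
    _ = _ := by rw [show (4 : ℝ) = 2 * 2 by norm_num, mul_pow]; ring

theorem eventually_le_volume_mul_volume_dotPolar (n : ℕ) [NeZero n] :
    ∀ᶠ δ in 𝓝 (0 : ℝ), ∀ K : Set (Fin n → ℝ), IsNearCube K δ →
      (∀ t, IsSignVector t → (signSupport t).card = 1 → t ∈ K) →
      ∀ z : Fin n → ℝ, (∀ i, |z i| ≤ 1 - δ / 2) → z ∉ K →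
      ENNReal.ofReal (4 ^ n / n.factorial + productGainConst n * δ) ≤
        volume K * volume (dotPolar K) := by
  have hn : (0 : ℝ) < n := Nat.cast_pos.2 (NeZero.pos n)
  have hgain : 0 < gainConst n / (96 * n) := div_pos (gainConst_pos n) (by positivity)
  filter_upwards [eventually_mul_le_nhds_zero (10000 * (n : ℝ) ^ 6) one_pos,
    eventually_mul_le_nhds_zero (errorConst n * (2 * n)) one_pos,
    eventually_mul_le_nhds_zero (deviationConst n) one_pos,
    eventually_mul_le_nhds_zero (8 * errorConst n * n ^ 2 + deviationConst n ^ 2) hgain]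
    with δ hsmall herror hdev hquad K hK hunit z hz hzK
  obtain ⟨X, Y, h⟩ := hK.exists_isContactMaps hunit
  exact h.le_volume_mul_volume_dotPolar hK hsmall herror hdev hquad hz hzK

end VolumeProduct

/-! ### Transfer to Euclidean space -/

lemma IsSignVector.eq_single_or_eq_neg_single {ι : Type*} [Fintype ι] [DecidableEq ι] {t : ι → ℝ}
    (ht : IsSignVector t) (hcard : (signSupport t).card = 1) :
    ∃ j, t = Pi.single j 1 ∨ t = -Pi.single j 1 := by
  obtain ⟨j, hj⟩ := Finset.card_eq_one.1 hcard
  have hzero {i : ι} (hi : i ≠ j) : t i = 0 := by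
    by_contra h
    exact hi (Finset.mem_singleton.1 (hj ▸ mem_signSupport.2 h))
  have hsingle : t = Pi.single j (t j) := by
    ext i
    rcases eq_or_ne i j with rfl | hi
    · simp
    · simp [hi, hzero hi]
  have htj : t j ≠ 0 := mem_signSupport.1 (hj ▸ Finset.mem_singleton_self j)
  refine ⟨j, ?_⟩
  rw [hsingle, ← Pi.single_neg]
  rcases ht j with h | h | h
  · exact absurd h htj
  · exact .inl (by simp [h])
  · exact .inr (by simp [h])

section Euclidean

variable {n : ℕ} {K : Set (EuclideanSpace ℝ (Fin n))}

lemma mem_smul_cube {a : ℝ} (ha : 0 < a) {x : EuclideanSpace ℝ (Fin n)} :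
    x ∈ a • cube n ↔ ∀ i, |x i| ≤ a := by
  rw [Set.mem_smul_set_iff_inv_smul_mem₀ ha.ne']
  refine forall_congr' fun i => ?_
  rw [PiLp.smul_apply, smul_eq_mul, abs_mul, abs_of_pos (inv_pos.2 ha), inv_mul_le_iff₀ ha, mul_one]

lemma isClosed_polarBody (K : Set (EuclideanSpace ℝ (Fin n))) : IsClosed (polarBody K) := by
  have hinter : polarBody K = ⋂ x ∈ K, {ξ | ⟪x, ξ⟫ ≤ 1} := by
    ext ξ; simp [polarBody]
  rw [hinter]
  exact isClosed_biInter fun x _ => isClosed_le (by fun_prop) continuous_const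

lemma volume_preimage_toLp (hK : IsClosed K) : volume (WithLp.toLp 2 ⁻¹' K) = volume K :=
  (PiLp.volume_preserving_toLp (Fin n)).measure_preimage hK.measurableSet.nullMeasurableSet

lemma dotPolar_preimage_toLp (K : Set (EuclideanSpace ℝ (Fin n))) :
    dotPolar (WithLp.toLp 2 ⁻¹' K) = WithLp.toLp 2 ⁻¹' polarBody K := by
  ext ξ
  have hinner (x : EuclideanSpace ℝ (Fin n)) : ⟪x, WithLp.toLp 2 ξ⟫ = x.ofLp ⬝ᵥ ξ := by
    simp [PiLp.inner_apply, dotProduct, mul_comm]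
  exact ⟨fun h x hx => (hinner x).trans_le (h x.ofLp hx),
    fun h x hx => (hinner (WithLp.toLp 2 x)).symm.trans_le (h (WithLp.toLp 2 x) hx)⟩

lemma isNearCube_preimage_toLp {δ : ℝ} (hδ : 0 < δ) (hhalf : δ ≤ 1 / 2) (hconv : Convex ℝ K)
    (hcpt : IsCompact K) (hsub : K ⊆ cube n) (hsup : (1 - δ) • cube n ⊆ K) :
    IsNearCube (WithLp.toLp 2 ⁻¹' K) δ where
  convex := hconv.linear_preimage (EuclideanSpace.equiv (Fin n) ℝ).symm.toLinearMap
  isCompact := (EuclideanSpace.equiv (Fin n) ℝ).symm.toHomeomorph.isCompact_preimage.2 hcpt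
  abs_le_one := fun _ hz i => hsub hz i
  mem_of_abs_le := fun _ hz => hsup ((mem_smul_cube (by linarith)).2 hz)
  pos := hδ
  le_half := hhalf

lemma ofReal_four_pow_div_factorial_add {c δ : ℝ} (hc : 0 ≤ c * δ) :
    ENNReal.ofReal (4 ^ n / n.factorial + c * δ) =
      (4 : ℝ≥0∞) ^ n / (n.factorial : ℝ≥0∞) + ENNReal.ofReal (c * δ) := by
  have hfact : (0 : ℝ) < n.factorial := Nat.cast_pos.2 n.factorial_pos
  rw [ENNReal.ofReal_add (by positivity) hc, ENNReal.ofReal_div_of_pos hfact,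
    ENNReal.ofReal_pow (by norm_num), ENNReal.ofReal_natCast]
  norm_num

end Euclidean

theorem volume_product_lower_bound_general (n : ℕ) [NeZero n] :
    ∃ δ₀ : ℝ, 0 < δ₀ ∧ ∃ c : ℝ, 0 < c ∧
      ∀ δ : ℝ, 0 < δ → δ ≤ δ₀ →
        ∀ K : Set (EuclideanSpace ℝ (Fin n)),
          Convex ℝ K → IsCompact K → K ⊆ cube n →
          (∀ j : Fin n, stdVec n j ∈ K ∧ -stdVec n j ∈ K) →
          (1 - δ) • cube n ⊆ K →
          (∀ δ' : ℝ, 0 ≤ δ' → δ' < δ → ¬ (1 - δ') • cube n ⊆ K) →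
          volume K * volume (polarBody K) ≥
            (4 : ℝ≥0∞) ^ n / (n.factorial : ℝ≥0∞) + ENNReal.ofReal (c * δ) := by
  have hnear : ∀ᶠ δ in 𝓝[>] (0 : ℝ), δ ≤ 1 / 2 ∧ _ :=
    (eventually_le_nhds one_half_pos).and (eventually_le_volume_mul_volume_dotPolar n)
      |>.filter_mono nhdsWithin_le_nhds
  obtain ⟨δ₀, hδ₀, hbound⟩ := mem_nhdsGT_iff_exists_Ioc_subset.1 hnear
  refine ⟨δ₀, hδ₀, productGainConst n, productGainConst_pos, ?_⟩
  intro δ hδ hδ_le K hconv hcpt hsub hstd hsup hmin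
  obtain ⟨hhalf, hvol⟩ := hbound ⟨hδ, hδ_le⟩
  have hunit (t : Fin n → ℝ) (ht : IsSignVector t) (hcard : (signSupport t).card = 1) :
      t ∈ WithLp.toLp 2 ⁻¹' K := by
    obtain ⟨j, rfl | rfl⟩ := ht.eq_single_or_eq_neg_single hcard
    exacts [(hstd j).1, (hstd j).2]
  obtain ⟨z, hz, hzK⟩ := Set.not_subset.1 (hmin (δ / 2) (by linarith) (by linarith))
  rw [mem_smul_cube (by linarith)] at hz
  have hprod := hvol _ (isNearCube_preimage_toLp hδ hhalf hconv hcpt hsub hsup) hunit z.ofLp hz hzK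
  rwa [dotPolar_preimage_toLp, volume_preimage_toLp hcpt.isClosed,
    volume_preimage_toLp (isClosed_polarBody K),
    ofReal_four_pow_div_factorial_add (mul_pos productGainConst_pos hδ).le] at hprod

/-- if `K ⊆ B∞ⁿ` is an origin-symmetric convex body with `±e_j ∈ ∂K`,
`(1−δ)B∞ⁿ ⊆ K` with `δ ≤ δ₀` minimal, then
`volₙ(K)·volₙ(K*) ≥ 4ⁿ/n! + cδ`. -/
theorem volume_product_lower_bound (n : ℕ) (hn : 2 ≤ n) :
    ∃ δ₀ : ℝ, 0 < δ₀ ∧ ∃ c : ℝ, 0 < c ∧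
      ∀ δ : ℝ, 0 < δ → δ ≤ δ₀ →
        ∀ K : Set (EuclideanSpace ℝ (Fin n)),
          Convex ℝ K → IsCompact K → (interior K).Nonempty → K = -K →
          K ⊆ cube n →
          (∀ j : Fin n, stdVec n j ∈ frontier K ∧ -stdVec n j ∈ frontier K) →
          (1 - δ) • cube n ⊆ K →
          (∀ δ' : ℝ, 0 ≤ δ' → δ' < δ → ¬ (1 - δ') • cube n ⊆ K) →
          volume K * volume (polarBody K) ≥
            (4 : ℝ≥0∞) ^ n / (n.factorial : ℝ≥0∞) + ENNReal.ofReal (c * δ) := by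
  have : NeZero n := ⟨by omega⟩
  obtain ⟨δ₀, hδ₀, c, hc, hbound⟩ := volume_product_lower_bound_general n
  exact ⟨δ₀, hδ₀, c, hc, fun δ hδ hδ_le K hconv hcpt _ _ hsub hstd => hbound δ hδ hδ_le K hconv hcpt
    hsub fun j => (hstd j).imp (hcpt.isClosed.frontier_subset ·) (hcpt.isClosed.frontier_subset ·)⟩
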